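/- arXiv:1809.07699 — 2 statements merged into one kernel-verified Lean document; each statement's English description precedes it below -/
import Mathlib

section
/- Let p be a prime and let G be a finite p-group of maximal class with |G| = p^n and cd(G) = {1, p, p^2}. Then cod(G) = {p^i | 0 ≤ i ≤ n-2}. -/
open CategoryTheory

/-- The degree of a complex representation: the dimension of the underlying vector space. -/
noncomputable def repDegree {G : Type} [Group G] (V : FDRep ℂ G) : ℕ :=
  Module.finrank ℂ V

/-- The kernel of a representation of `G`, as a subgroup of `G`. -/
noncomputable def repKer {G : Type} [Group G] (V : FDRep ℂ G) : Subgroup G :=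
  MonoidHom.ker (Representation.asGroupHom V.ρ)

/-- The codegree of a character: `|G : ker χ| / χ(1)`. -/
noncomputable def codegree {G : Type} [Group G] (V : FDRep ℂ G) : ℕ :=
  (repKer V).index / repDegree V

/-- `cod(G)`: the set of codegrees of the irreducible complex characters of `G`. -/
def codSet (G : Type) [Group G] : Set ℕ :=
  {m | ∃ V : FDRep ℂ G, Simple V ∧ codegree V = m}

/-- `cd(G)`: the set of degrees of the irreducible complex characters of `G`. -/
def cdSet (G : Type) [Group G] : Set ℕ :=
  {m | ∃ V : FDRep ℂ G, Simple V ∧ repDegree V = m}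

/-- The nilpotency class of `G`: the least `n` with `upperCentralSeries G n = ⊤`. -/
noncomputable def nilClass (G : Type) [Group G] : ℕ :=
  sInf {n | upperCentralSeries G n = ⊤}

open scoped Classical in
/-- The character of `G` induced from the linear character `lam` of the subgroup `H`. -/
noncomputable def indLinearChar {G : Type} [Group G] [Fintype G] (H : Subgroup G)
    (lam : H →* ℂˣ) : G → ℂ :=
  fun g => (∑ x : G, if h : x * g * x⁻¹ ∈ H then ((lam ⟨x * g * x⁻¹, h⟩ : ℂˣ) : ℂ) else 0) /
    (Nat.card H : ℂ)

/-- A finite group is normally monomial if every irreducible complex character is induced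
from a linear character of a normal subgroup. -/
def NormallyMonomial (G : Type) [Group G] [Fintype G] : Prop :=
  ∀ V : FDRep ℂ G, Simple V → ∃ (H : Subgroup G) (lam : H →* ℂˣ),
    H.Normal ∧ FDRep.character V = indLinearChar H lam

/-!
In a `p`-group of maximal class with upper central series `Z_j`, a normal subgroup that contains
`Z_j` but not `Z_{j+1}` equals `Z_j`, so each `Z_j` of index at least `p ^ 3` is the kernel of an
irreducible character. A character `χ` of degree `p` is diagonalised by a noncentral element of
`G ⧸ ker χ` whose commutators are all central, and the centralizer of that element has index `p`
and is abelian modulo `ker χ`; hence every irreducible character whose kernel contains `ker χ` has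
degree at most `p`. So along the kernels `Z_j` the degree goes up from `p` to `p ^ 2` at most once
and never comes down, and the quotients index / degree hit every power of `p` in between. The same
comparison excludes a faithful character of degree `p`, which is the only one whose codegree would
be too large.
-/

open Module commutatorElement

theorem commutatorElement_mem_ker_iff_commute {G M : Type*} [Group G] [Monoid M] (f : G →* M)
    {x y : G} : ⁅x, y⁆ ∈ f.ker ↔ Commute (f x) (f y) := by
  rw [MonoidHom.mem_ker, commute_iff_eq, ← map_mul, ← map_mul,
    show x * y = ⁅x, y⁆ * (y * x) by group, map_mul f ⁅x, y⁆]
  refine ⟨fun h => by rw [h, one_mul], fun h => ?_⟩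
  exact ((Group.isUnit (y * x)).map f).mul_right_cancel (h.trans (one_mul _).symm)

section LinearAlgebra

variable {k V : Type*} [Field k] [AddCommGroup V] [Module k V]

theorem exists_common_eigenvector [IsAlgClosed k] [FiniteDimensional k V] [Nontrivial V]
    {S : Set (End k V)} (hS : ∀ a ∈ S, ∀ b ∈ S, a * b = b * a) :
    ∃ v : V, v ≠ 0 ∧ ∀ a ∈ S, ∃ c : k, a v = c • v := by
  have := Algebra.isMulCommutative_adjoin k hS
  have : IsArtinian (Algebra.adjoin k S) V := isArtinian_of_tower k inferInstance
  obtain ⟨W, hW⟩ := IsAtomic.exists_atom (Submodule (Algebra.adjoin k S) V)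
  have : IsSimpleModule (Algebra.adjoin k S) W := isSimpleModule_iff_isAtom.2 hW
  have : FiniteDimensional k W := inferInstanceAs (FiniteDimensional k (W.restrictScalars k))
  have hrank : finrank k (W.restrictScalars k) = 1 :=
    IsSimpleModule.finrank_eq_one_of_isMulCommutative (Algebra.adjoin k S) W k
  obtain ⟨⟨v, hv⟩, hv0, hspan⟩ := finrank_eq_one_iff'.1 hrank
  refine ⟨v, fun h => hv0 (Subtype.ext h), fun a ha => ?_⟩
  obtain ⟨c, hc⟩ := hspan ⟨a v, W.smul_mem ⟨a, Algebra.subset_adjoin ha⟩ hv⟩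
  exact ⟨c, (congrArg Subtype.val hc).symm⟩

theorem commute_of_commute_of_injective_eigenvalues {ι : Type*} (b : Basis ι k V) {T : End k V}
    {μ : ι → k} (hμ : Function.Injective μ) (hT : ∀ i, T (b i) = μ i • b i) {A B : End k V}
    (hA : Commute A T) (hB : Commute B T) : Commute A B := by
  have diagonal {C : End k V} (hC : Commute C T) (i : ι) : ∃ c : k, C (b i) = c • b i := by
    have hcoord (j : ι) : b.coord j ∘ₗ T = μ j • b.coord j :=
      b.ext fun l => by
        obtain rfl | hlj := eq_or_ne l j <;> simp [*]
    refine ⟨b.repr (C (b i)) i, b.ext_elem fun j => ?_⟩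
    obtain rfl | hij := eq_or_ne i j
    · simp
    · have hTC : T (C (b i)) = μ i • C (b i) := by
        rw [← End.mul_apply, ← hC.eq, End.mul_apply, hT, map_smul]
      have := LinearMap.congr_fun (hcoord j) (C (b i))
      simp only [LinearMap.comp_apply, hTC, map_smul, LinearMap.smul_apply, Basis.coord_apply,
        smul_eq_mul] at this
      have hzero : b.repr (C (b i)) j = 0 :=
        (mul_eq_mul_right_iff.1 this).resolve_left (hμ.ne hij)
      simp [hzero, hij]
  refine b.ext fun i => ?_
  obtain ⟨α, hα⟩ := diagonal hA i
  obtain ⟨β, hβ⟩ := diagonal hB i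
  simp only [End.mul_apply, hα, hβ, map_smul, smul_comm α β]

end LinearAlgebra

section Irreducible

variable {k G V : Type*} [Field k] [Monoid G] [AddCommGroup V] [Module k V]
  {ρ : Representation k G V}

theorem eq_top_of_isIrreducible [ρ.IsIrreducible] {U : Submodule k V} (hU : ∀ g, ∀ v ∈ U, ρ g v ∈ U)
    (hne : U ≠ ⊥) : U = ⊤ := by
  have h := eq_bot_or_eq_top (⟨U, fun g v => hU g v⟩ : Subrepresentation ρ)
  exact congrArg Subrepresentation.toSubmodule
    (h.resolve_left fun h => hne (congrArg Subrepresentation.toSubmodule h))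

variable (ρ) in
theorem nontrivial_of_isIrreducible [ρ.IsIrreducible] : Nontrivial V :=
  IsSimpleModule.nontrivial (MonoidAlgebra k G) ρ.asModule

variable (ρ) in
theorem isIrreducible_of_finrank_eq_one (h : finrank k V = 1) : ρ.IsIrreducible := by
  have : IsSimpleModule k V := isSimpleModule_iff_finrank_eq_one.2 h
  exact
    { exists_pair_ne := ⟨⊥, ⊤, fun h => bot_ne_top (α := Submodule k V)
        (congrArg Subrepresentation.toSubmodule h)⟩
      eq_bot_or_eq_top := fun U => (eq_bot_or_eq_top U.toSubmodule).imp
        (fun h => Subrepresentation.toSubmodule_injective h)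
        (fun h => Subrepresentation.toSubmodule_injective h) }

theorem exists_eq_smul_one_of_forall_commute [IsAlgClosed k] [FiniteDimensional k V]
    [ρ.IsIrreducible] {T : End k V} (hT : ∀ g, Commute T (ρ g)) : ∃ c : k, T = c • 1 := by
  let f : ρ.IntertwiningMap ρ := ⟨T, fun g => hT g⟩
  obtain ⟨c, hc⟩ :=
    (Representation.IsIrreducible.algebraMap_intertwiningMap_bijective_of_isAlgClosed
      (ρ := ρ)).surjective f
  exact ⟨c, congrArg (·.toLinearMap) hc.symm⟩

theorem span_range_eq_top [ρ.IsIrreducible] {v : V} (hv : v ≠ 0) :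
    Submodule.span k (Set.range fun g => ρ g v) = ⊤ := by
  refine eq_top_of_isIrreducible (ρ := ρ) (fun g w hw => ?_) fun h => hv ?_
  · refine Submodule.span_le (p := (Submodule.span k _).comap (ρ g)).2 ?_ hw
    rintro _ ⟨x, rfl⟩
    exact Submodule.subset_span ⟨g * x, by simp⟩
  · exact Submodule.span_eq_bot.1 h v ⟨1, by simp⟩

end Irreducible

section Index

variable {k G V : Type*} [Field k] [Group G] [AddCommGroup V] [Module k V]
  {ρ : Representation k G V}

theorem finrank_le_index_of_forall_eigenvector [ρ.IsIrreducible] (A : Subgroup G) [A.FiniteIndex]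
    {v : V} (hv : v ≠ 0) (hA : ∀ a ∈ A, ∃ c : k, ρ a v = c • v) : finrank k V ≤ A.index := by
  have := Fintype.ofFinite (G ⧸ A)
  have hspan : Submodule.span k (Set.range fun q : G ⧸ A => ρ q.out v) = ⊤ := by
    rw [eq_top_iff, ← span_range_eq_top (ρ := ρ) hv, Submodule.span_le]
    rintro _ ⟨g, rfl⟩
    obtain ⟨a, ha⟩ := QuotientGroup.mk_out_eq_mul A g
    obtain ⟨c, hc⟩ := hA (a : G)⁻¹ (inv_mem a.2)
    have hg : ρ g v = c • ρ (g : G ⧸ A).out v := by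
      rw [← map_smul, ← hc, ← End.mul_apply, ← map_mul, ha, mul_inv_cancel_right]
    simp only [hg]
    exact Submodule.smul_mem _ _ (Submodule.subset_span ⟨g, rfl⟩)
  have := finrank_range_le_card (R := k) fun q : G ⧸ A => ρ q.out v
  rwa [Set.finrank, hspan, finrank_top, ← Nat.card_eq_fintype_card] at this

variable [IsAlgClosed k] [FiniteDimensional k V]

theorem finrank_le_index [ρ.IsIrreducible] (A : Subgroup G) [A.FiniteIndex]
    (hA : ⁅A, A⁆ ≤ MonoidHom.ker ρ) : finrank k V ≤ A.index := by
  have := nontrivial_of_isIrreducible ρ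
  obtain ⟨v, hv, heigen⟩ := exists_common_eigenvector (S := ρ '' A) <| by
    rintro _ ⟨a, ha, rfl⟩ _ ⟨b, hb, rfl⟩
    exact (commutatorElement_mem_ker_iff_commute ρ).1
      (hA (Subgroup.commutator_mem_commutator ha hb))
  exact finrank_le_index_of_forall_eigenvector A hv fun a ha => heigen _ ⟨a, ha, rfl⟩

theorem finrank_eq_one_iff_commutator_le_ker [ρ.IsIrreducible] :
    finrank k V = 1 ↔ commutator G ≤ MonoidHom.ker ρ := by
  have := nontrivial_of_isIrreducible ρ
  refine ⟨fun h => ?_, fun h => ?_⟩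
  · rw [commutator_eq_closure, Subgroup.closure_le]
    rintro _ ⟨x, y, rfl⟩
    obtain ⟨c, hc, -⟩ := LinearMap.existsUnique_eq_smul_id_of_finrank_eq_one h (ρ x)
    refine (commutatorElement_mem_ker_iff_commute ρ).2 ?_
    rw [hc]
    exact (Commute.one_left _).smul_left c
  · exact ((finrank_le_index ⊤ h).trans_eq Subgroup.index_top).antisymm finrank_pos

theorem finrank_le_prime_pow_sub_two {p a : ℕ} [Fact p.Prime] [ρ.IsIrreducible]
    (hker : (MonoidHom.ker ρ).index = p ^ a) : finrank k V ≤ p ^ (a - 2) := by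
  have hp : p.Prime := Fact.out
  have : (MonoidHom.ker ρ).FiniteIndex := ⟨hker ▸ pow_ne_zero a hp.ne_zero⟩
  obtain ha | ha := lt_or_ge a 2
  · have : IsCyclic (G ⧸ MonoidHom.ker ρ) := isCyclic_of_card_dvd_prime (p := p)
      ((hker ▸ pow_dvd_pow p (Nat.le_of_lt_succ ha)).trans (pow_one p).dvd)
    rw [finrank_eq_one_iff_commutator_le_ker (ρ := ρ) |>.2
      (Subgroup.Normal.quotient_commutative_iff_commutator_le.1 inferInstance)]
    exact Nat.one_le_pow _ _ hp.pos
  · obtain ⟨B, hB⟩ := Sylow.exists_subgroup_card_pow_prime (G := G ⧸ MonoidHom.ker ρ) p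
      (hker ▸ pow_dvd_pow p ha)
    have hBcomm : ⁅B, B⁆ = ⊥ :=
      Subgroup.commutator_self_eq_bot_iff.2 (IsPGroup.isMulCommutative_of_card_eq_prime_sq hB)
    let A := B.comap (QuotientGroup.mk' (MonoidHom.ker ρ))
    have hA : ⁅A, A⁆ ≤ MonoidHom.ker ρ := Subgroup.commutator_le.2 fun x hx y hy =>
      (QuotientGroup.eq_one_iff _).1 <| Subgroup.mem_bot.1 <|
        hBcomm ▸ Subgroup.commutator_mem_commutator (H₁ := B) (H₂ := B) hx hy
    have hindex : A.index = p ^ (a - 2) := by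
      refine Nat.eq_of_mul_eq_mul_left (pow_pos hp.pos 2) ?_
      rw [← pow_add, Nat.add_sub_cancel' ha, ← hker, ← hB,
        B.index_comap_of_surjective (QuotientGroup.mk'_surjective _)]
      exact B.card_mul_index
    have : A.FiniteIndex := ⟨hindex ▸ pow_ne_zero _ hp.ne_zero⟩
    exact hindex ▸ finrank_le_index A hA

end Index

theorem exists_normal_index_eq_prime {G : Type*} [Group G] [Finite G] [Nontrivial G] {p : ℕ}
    [hp : Fact p.Prime] (hG : IsPGroup p G) : ∃ N : Subgroup G, N.Normal ∧ N.index = p := by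
  obtain ⟨n, hn, hcard⟩ := hG.nontrivial_iff_card.1 ‹_›
  obtain ⟨N, hN⟩ := Sylow.exists_subgroup_card_pow_prime p
    (hcard ▸ pow_dvd_pow p (Nat.sub_le n 1))
  have hindex : N.index = p := by
    refine Nat.eq_of_mul_eq_mul_left (pow_pos hp.out.pos (n - 1)) ?_
    rw [← pow_succ, Nat.sub_add_cancel hn, ← hcard, ← hN, N.card_mul_index]
  refine ⟨N, Subgroup.normal_of_index_eq_minFac_card ?_, hindex⟩
  rw [hindex, hcard, hp.out.pow_minFac hn.ne']

theorem exists_mem_notMem_forall_commutatorElement_mem {G : Type*} [Group G] [Group.IsNilpotent G]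
    {N M : Subgroup G} [N.Normal] (h : ¬ N ≤ M) : ∃ b ∈ N, b ∉ M ∧ ∀ g, ⁅b, g⁆ ∈ M := by
  by_contra! hM
  have hle (m : ℕ) : N ⊓ Subgroup.upperCentralSeries G m ≤ M := by
    induction m with
    | zero => exact inf_le_right.trans bot_le
    | succ m ih =>
      rintro x ⟨hxN, hx⟩
      by_contra hxM
      obtain ⟨g, hg⟩ := hM x hxN hxM
      have hxg : ⁅x, g⁆ ∈ N :=
        Subgroup.commutator_le_left N ⊤
          (Subgroup.commutator_mem_commutator hxN (Subgroup.mem_top g))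
      exact hg (ih ⟨hxg, Subgroup.mem_upperCentralSeries_succ_iff.1 hx g⟩)
  obtain ⟨m, hm⟩ := Group.IsNilpotent.nilpotent G
  exact h (by simpa [hm] using hle m)

section CentralCommutators

variable {k G V : Type*} [Field k] [Group G] [AddCommGroup V] [Module k V]
  {ρ : Representation k G V}

theorem exists_monoidHom_eq_smul_one [Nontrivial V] {b : G}
    (hb : ∀ g, ∃ c : k, ρ ⁅b, g⁆ = c • 1) : ∃ z : G →* kˣ, ∀ g, ρ ⁅b, g⁆ = (z g : k) • 1 := by
  choose c hc using hb
  have hinj : Function.Injective fun a : k => a • (1 : End k V) :=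
    smul_left_injective k one_ne_zero
  let z : G →* k :=
    { toFun := c
      map_one' := hinj <| by simp [← hc]
      map_mul' := fun x y => hinj <| by
        have hxy : ⁅b, x * y⁆ = ⁅b, x⁆ * (x * ⁅b, y⁆ * x⁻¹) := by group
        simp only [← hc (x * y), hxy, map_mul, hc x, hc y, mul_smul_comm, mul_one,
          smul_mul_assoc, ← map_mul ρ x, mul_inv_cancel, map_one, smul_smul, mul_comm] }
  exact ⟨z.toHomUnits, hc⟩

variable {b : G} {z : G →* kˣ}

theorem mem_ker_iff_commute_of_eq_smul_one [Nontrivial V] (hz : ∀ g, ρ ⁅b, g⁆ = (z g : k) • 1)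
    {g : G} : g ∈ z.ker ↔ Commute (ρ b) (ρ g) := by
  rw [← commutatorElement_mem_ker_iff_commute, MonoidHom.mem_ker, MonoidHom.mem_ker, hz,
    ← Units.val_eq_one]
  exact ⟨fun h => by rw [h, one_smul],
    fun h => smul_left_injective k (one_ne_zero (α := End k V)) (h.trans (one_smul k _).symm)⟩

-- If `w` is an eigenvector of `ρ b` for `μ`, then `ρ g w` is one for `z g * μ`.
theorem exists_linearIndependent_eigenvectors [IsAlgClosed k] [FiniteDimensional k V]
    [Nontrivial V] (hz : ∀ g, ρ ⁅b, g⁆ = (z g : k) • 1) :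
    ∃ (v : z.range → V) (μ : z.range → k), LinearIndependent k v ∧ Function.Injective μ ∧
      ∀ i, ρ b (v i) = μ i • v i := by
  obtain ⟨μ, hμ⟩ := End.exists_eigenvalue (ρ b)
  obtain ⟨w, hw⟩ := hμ.exists_hasEigenvector
  have hρ_ne {g : G} {x : V} (hx : x ≠ 0) : ρ g x ≠ 0 :=
    (map_ne_zero_iff _ (ρ.apply_bijective g).injective).2 hx
  have hμ0 : μ ≠ 0 := by
    rintro rfl
    exact hρ_ne hw.2 (hw.apply_eq_smul.trans (zero_smul k w))
  have heigen (g : G) : ρ b (ρ g w) = ((z g : k) * μ) • ρ g w := by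
    rw [mul_smul, ← map_smul, ← hw.apply_eq_smul]
    simp only [← End.mul_apply, ← map_mul]
    rw [show b * g = ⁅b, g⁆ * (g * b) by group, map_mul, hz]
    simp
  choose s hs using fun i : z.range => i.2
  have hinj : Function.Injective fun i : z.range => ((i : kˣ) : k) * μ := fun i j h =>
    Subtype.ext (Units.ext (mul_right_cancel₀ hμ0 h))
  have hv (i : z.range) : ρ b (ρ (s i) w) = (((i : kˣ) : k) * μ) • ρ (s i) w := by
    rw [heigen, hs]
  exact ⟨fun i => ρ (s i) w, _, End.eigenvectors_linearIndependent' (ρ b) _ hinj _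
    fun i => ⟨End.mem_eigenspace_iff.2 (hv i), hρ_ne hw.2⟩, hinj, hv⟩

variable [IsAlgClosed k] [FiniteDimensional k V] [Nontrivial V]

theorem index_ker_le_finrank (hz : ∀ g, ρ ⁅b, g⁆ = (z g : k) • 1) :
    z.ker.index ≤ finrank k V := by
  obtain ⟨v, -, hv, -⟩ := exists_linearIndependent_eigenvectors hz
  have : Finite z.range := hv.finite
  have := Fintype.ofFinite z.range
  rw [Subgroup.index_ker, Nat.card_eq_fintype_card]
  exact hv.fintype_card_le_finrank

theorem commutator_ker_le_ker_of_index_eq_finrank (hz : ∀ g, ρ ⁅b, g⁆ = (z g : k) • 1)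
    (hindex : z.ker.index = finrank k V) : ⁅z.ker, z.ker⁆ ≤ MonoidHom.ker ρ := by
  obtain ⟨v, μ, hv, hμ, heigen⟩ := exists_linearIndependent_eigenvectors hz
  have : Finite z.range := hv.finite
  have := Fintype.ofFinite z.range
  let B := basisOfLinearIndependentOfCardEqFinrank hv
    (by rw [← hindex, Subgroup.index_ker, Nat.card_eq_fintype_card])
  have hB (i : z.range) : ρ b (B i) = μ i • B i := by
    simp only [B, coe_basisOfLinearIndependentOfCardEqFinrank, heigen]
  refine Subgroup.commutator_le.2 fun x hx y hy => (commutatorElement_mem_ker_iff_commute ρ).2 ?_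
  exact commute_of_commute_of_injective_eigenvalues B hμ hB
    ((mem_ker_iff_commute_of_eq_smul_one hz).1 hx).symm
    ((mem_ker_iff_commute_of_eq_smul_one hz).1 hy).symm

end CentralCommutators

section PrimeDegree

variable {k G V W : Type*} [Field k] [IsAlgClosed k] [Group G]
  [AddCommGroup V] [Module k V] [FiniteDimensional k V]
  [AddCommGroup W] [Module k W] [FiniteDimensional k W]
  {ρ : Representation k G V} {σ : Representation k G W}

theorem exists_eq_smul_one_iff [ρ.IsIrreducible] {g : G} :
    (∃ c : k, ρ g = c • 1) ↔ g ∈ Subgroup.upperCentralSeriesStep (MonoidHom.ker ρ) := by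
  simp only [Subgroup.mem_upperCentralSeriesStep, commutatorElement_mem_ker_iff_commute]
  refine ⟨fun ⟨c, hc⟩ x => ?_, exists_eq_smul_one_of_forall_commute⟩
  rw [hc]
  exact (Commute.one_left _).smul_left c

theorem exists_index_eq_and_commutator_le_ker [Finite G] {p : ℕ} [Fact p.Prime]
    (hG : IsPGroup p G) [ρ.IsIrreducible] (hdeg : finrank k V = p) :
    ∃ A : Subgroup G, A.index = p ∧ ⁅A, A⁆ ≤ MonoidHom.ker ρ := by
  have hp : p.Prime := Fact.out
  have := nontrivial_of_isIrreducible ρ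
  have := hG.isNilpotent
  have hcenter : Subgroup.upperCentralSeriesStep (MonoidHom.ker ρ) ≠ ⊤ := fun h =>
    hp.ne_one <| hdeg ▸ finrank_eq_one_iff_commutator_le_ker.2
      (Subgroup.commutator_le.2 fun x _ y _ =>
        Subgroup.mem_upperCentralSeriesStep (N := MonoidHom.ker ρ) x |>.1
          (h ▸ Subgroup.mem_top x) y)
  obtain ⟨b, -, hb, hbcomm⟩ :=
    exists_mem_notMem_forall_commutatorElement_mem (mt top_le_iff.1 hcenter)
  obtain ⟨z, hz⟩ := exists_monoidHom_eq_smul_one fun g => exists_eq_smul_one_iff.2 (hbcomm g)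
  have hne : z.ker.index ≠ 1 := fun h => hb fun g =>
    (commutatorElement_mem_ker_iff_commute ρ).2 <| (mem_ker_iff_commute_of_eq_smul_one hz).1 <|
      Subgroup.index_eq_one.1 h ▸ Subgroup.mem_top g
  have hindex : z.ker.index = p := by
    obtain ⟨m, hm⟩ := hG.index z.ker
    refine (hdeg ▸ index_ker_le_finrank hz).antisymm (Nat.le_of_dvd ?_ ?_)
    · exact Nat.pos_of_ne_zero Subgroup.index_ne_zero_of_finite
    · exact hm ▸ dvd_pow_self p (by rintro rfl; exact hne hm)
  exact ⟨z.ker, hindex, commutator_ker_le_ker_of_index_eq_finrank hz (hindex.trans hdeg.symm)⟩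

theorem finrank_le_of_ker_le_of_finrank_eq_prime [Finite G] {p : ℕ} [Fact p.Prime]
    (hG : IsPGroup p G) [ρ.IsIrreducible] [σ.IsIrreducible] (hdeg : finrank k V = p)
    (hker : MonoidHom.ker ρ ≤ MonoidHom.ker σ) : finrank k W ≤ p := by
  obtain ⟨A, hA, hcomm⟩ := exists_index_eq_and_commutator_le_ker (ρ := ρ) hG hdeg
  exact hA ▸ finrank_le_index A (hcomm.trans hker)

end PrimeDegree

section Existence

variable {k G V : Type*} [Field k] [Group G] [AddCommGroup V] [Module k V]
  {ρ : Representation k G V}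

theorem isIrreducible_toRepresentation_of_isAtom {τ : Subrepresentation ρ} (hτ : IsAtom τ) :
    τ.toRepresentation.IsIrreducible where
  exists_pair_ne := ⟨⊥, ⊤, fun h => hτ.1 <| Subrepresentation.toSubmodule_injective <|
    (Submodule.subsingleton_iff_eq_bot (p := τ.toSubmodule)).1 <|
      (Submodule.subsingleton_iff k).1 <| subsingleton_of_bot_eq_top <|
        congrArg Subrepresentation.toSubmodule h⟩
  eq_bot_or_eq_top U := by
    let U' : Subrepresentation ρ := ⟨U.toSubmodule.map τ.toSubmodule.subtype, by
      rintro g _ ⟨v, hv, rfl⟩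
      exact ⟨_, U.apply_mem_toSubmodule g hv, rfl⟩⟩
    have hmap := Submodule.map_injective_of_injective τ.toSubmodule.injective_subtype
    have hle : U' ≤ τ := Submodule.map_subtype_le _ _
    refine (hτ.le_iff.1 hle).imp (fun h => ?_) fun h => ?_
    · refine Subrepresentation.toSubmodule_injective <| hmap ?_
      exact (congrArg Subrepresentation.toSubmodule h).trans (Submodule.map_bot _).symm
    · refine Subrepresentation.toSubmodule_injective <| hmap ?_
      exact (congrArg Subrepresentation.toSubmodule h).trans (Submodule.map_subtype_top _).symm

theorem exists_isIrreducible_toRepresentation_apply_ne_one [ρ.IsSemisimpleRepresentation] {g : G}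
    (hg : ρ g ≠ 1) :
    ∃ τ : Subrepresentation ρ, τ.toRepresentation.IsIrreducible ∧ τ.toRepresentation g ≠ 1 := by
  have : IsSemisimpleModule (MonoidAlgebra k G) ρ.asModule :=
    ρ.isSemisimpleRepresentation_iff_isSemisimpleModule_asModule.1 inferInstance
  by_contra! h
  refine hg (LinearMap.ext fun (v : ρ.asModule) => ?_)
  have hv : v ∈ sSup {S : Submodule (MonoidAlgebra k G) ρ.asModule |
      IsSimpleModule (MonoidAlgebra k G) S} :=
    IsSemisimpleModule.sSup_simples_eq_top (MonoidAlgebra k G) ρ.asModule ▸ Submodule.mem_top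
  rw [sSup_eq_iSup'] at hv
  refine Submodule.iSup_induction _ (motive := fun v : ρ.asModule => ρ g v = v) hv ?_
    (map_zero _) ?_
  · rintro ⟨S, hS⟩ x hx
    let e := (Subrepresentation.subrepresentationSubmoduleOrderIso (ρ := ρ)).symm
    have hatom : IsAtom (e S) := (e.isAtom_iff S).2 (isSimpleModule_iff_isAtom.1 hS)
    have := LinearMap.congr_fun (h _ (isIrreducible_toRepresentation_of_isAtom hatom)) ⟨x, hx⟩
    exact congrArg Subtype.val this
  · exact fun x y hx hy => (map_add (ρ g) x y).trans (congrArg₂ (· + ·) hx hy)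

variable (k G) in
theorem ker_leftRegular : MonoidHom.ker (Representation.leftRegular k G) = ⊥ := by
  refine (MonoidHom.ker_eq_bot_iff _).2 fun x y h => ?_
  have := LinearMap.congr_fun h (MonoidAlgebra.single 1 1)
  simp only [Representation.ofMulAction_single, smul_eq_mul, mul_one] at this
  exact MonoidAlgebra.single_left_injective one_ne_zero this

theorem exists_isIrreducible_le_ker_notMem (k : Type*) [Field k] [Finite G]
    [NeZero (Nat.card G : k)] (N : Subgroup G) [N.Normal] {g : G} (hg : g ∉ N) :
    ∃ (ρ : Representation k G (MonoidAlgebra k (G ⧸ N))) (τ : Subrepresentation ρ),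
      τ.toRepresentation.IsIrreducible ∧ N ≤ MonoidHom.ker τ.toRepresentation ∧
        g ∉ MonoidHom.ker τ.toRepresentation := by
  let ρ : Representation k G (MonoidAlgebra k (G ⧸ N)) :=
    (Representation.leftRegular k (G ⧸ N)).comp (QuotientGroup.mk' N)
  have hker : MonoidHom.ker ρ = N := by
    rw [← MonoidHom.comap_ker, ker_leftRegular, MonoidHom.comap_bot, QuotientGroup.ker_mk']
  obtain ⟨τ, hτ, hτg⟩ := exists_isIrreducible_toRepresentation_apply_ne_one
    (ρ := ρ) (g := g) (by rwa [← hker] at hg)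
  refine ⟨ρ, τ, hτ, fun x hx => LinearMap.ext fun v => Subtype.ext ?_, hτg⟩
  exact LinearMap.congr_fun (hker.ge hx) (v : MonoidAlgebra k (G ⧸ N))

end Existence

section FDRep

variable {k G : Type*} [Field k] [Monoid G]

theorem isIrreducible_of_simple (V : FDRep k G) [Simple V] : Representation.IsIrreducible V.ρ where
  exists_pair_ne := ⟨⊥, ⊤, fun h => id_nonzero V <| by
    ext x
    exact (congrArg Subrepresentation.toSubmodule h).ge (Submodule.mem_top (x := x))⟩
  eq_bot_or_eq_top U := by
    let i : FDRep.of U.toRepresentation ⟶ V :=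
      ⟨InducedCategory.homMk (ModuleCat.ofHom U.toSubmodule.subtype), fun _ => rfl⟩
    have : Mono i := ⟨fun a b hab => by
      ext x
      exact congr(($hab).hom.hom.hom x)⟩
    obtain hi | hi := eq_or_ne i 0
    · refine Or.inl (Subrepresentation.toSubmodule_injective <| (Submodule.eq_bot_iff _).2 ?_)
      exact fun x hx => congr(($hi).hom.hom.hom ⟨x, hx⟩)
    · have := isIso_of_mono_of_nonzero hi
      refine Or.inr (Subrepresentation.toSubmodule_injective <| Submodule.eq_top_iff'.2 fun x => ?_)
      have hx : ((inv i).hom.hom.hom x : U.toSubmodule).1 = x :=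
        congr(($(IsIso.inv_hom_id i)).hom.hom.hom x)
      exact hx ▸ ((inv i).hom.hom.hom x : U.toSubmodule).2

theorem simple_of_isIrreducible (V : FDRep k G) [Representation.IsIrreducible V.ρ] : Simple V := by
  refine ⟨fun {Y} f _ => ⟨fun _ hf => ?_, fun hf => ?_⟩⟩
  · have := nontrivial_of_isIrreducible V.ρ
    obtain ⟨x, hx⟩ := exists_ne (0 : V)
    refine hx ?_
    have hid : 𝟙 V = 0 := (IsIso.inv_hom_id f).symm.trans
      ((congrArg (inv f ≫ ·) hf).trans Limits.comp_zero)
    exact congr(($hid).hom.hom.hom x)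
  · let F : Y →ₗ[k] V := f.hom.hom.hom
    have hrange : LinearMap.range F = ⊤ := by
      refine eq_top_of_isIrreducible (ρ := V.ρ) ?_ fun h => hf ?_
      · rintro g _ ⟨y, rfl⟩
        exact ⟨Y.ρ g y, congr(($(f.comm g)).hom.hom y)⟩
      · ext y
        exact congr($(LinearMap.range_eq_bot.1 h) y)
    have : Epi f := ⟨fun a b hab => by
      ext x
      obtain ⟨y, rfl⟩ := LinearMap.range_eq_top.1 hrange x
      exact congr(($hab).hom.hom.hom y)⟩
    exact isIso_of_mono_of_epi f

end FDRep

section UpperCentralSeries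

variable {G : Type*} [Group G]

theorem inf_upperCentralSeries_lt_inf_succ [Group.IsNilpotent G] {N : Subgroup G} [N.Normal]
    {m : ℕ} (h : ¬ N ≤ Subgroup.upperCentralSeries G m) :
    N ⊓ Subgroup.upperCentralSeries G m < N ⊓ Subgroup.upperCentralSeries G (m + 1) := by
  obtain ⟨b, hbN, hb, hbcomm⟩ := exists_mem_notMem_forall_commutatorElement_mem h
  have hmono := inf_le_inf_left N (Subgroup.upperCentralSeries_mono G m.le_succ)
  refine hmono.lt_of_not_ge fun hle => ?_
  exact hb (hle ⟨hbN, Subgroup.mem_upperCentralSeries_succ_iff.2 hbcomm⟩).2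

theorem upperCentralSeries_succ_eq_top_of_commutator_le {m : ℕ}
    (h : commutator G ≤ Subgroup.upperCentralSeries G m) :
    Subgroup.upperCentralSeries G (m + 1) = ⊤ :=
  (Subgroup.eq_top_iff' _).2 fun x => Subgroup.mem_upperCentralSeries_succ_iff.2 fun y =>
    h (Subgroup.commutator_mem_commutator (Subgroup.mem_top x) (Subgroup.mem_top y))

theorem upperCentralSeries_succ_eq_top_of_isCyclic_quotient {m : ℕ}
    [IsCyclic (G ⧸ Subgroup.upperCentralSeries G (m + 1))] :
    Subgroup.upperCentralSeries G (m + 1) = ⊤ := by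
  let f := QuotientGroup.map (Subgroup.upperCentralSeries G m)
    (Subgroup.upperCentralSeries G (m + 1)) (MonoidHom.id G)
    (Subgroup.upperCentralSeries_mono G m.le_succ)
  have hf : f.ker ≤ Subgroup.center (G ⧸ Subgroup.upperCentralSeries G m) := by
    intro q hq
    obtain ⟨x, rfl⟩ := QuotientGroup.mk'_surjective _ q
    have hx : x ∈ Subgroup.upperCentralSeries G (m + 1) := (QuotientGroup.eq_one_iff x).1 hq
    exact (Subgroup.upperCentralSeriesStep_eq_comap_center _).le hx
  have := f.isMulCommutative_of_isCyclic_of_ker_le_center hf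
  exact upperCentralSeries_succ_eq_top_of_commutator_le
    (Subgroup.Normal.quotient_commutative_iff_commutator_le.1 ‹_›)

theorem nilClass_eq_nilpotencyClass (G : Type) [Group G] [Group.IsNilpotent G] :
    nilClass G = Group.nilpotencyClass G := by
  have hmem : nilClass G ∈ {n | Subgroup.upperCentralSeries G n = ⊤} :=
    Nat.sInf_mem ⟨_, Subgroup.upperCentralSeries_nilpotencyClass⟩
  exact (Nat.sInf_le Subgroup.upperCentralSeries_nilpotencyClass).antisymm
    (Subgroup.upperCentralSeries_eq_top_iff_nilpotencyClass_le.1 hmem)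

variable [Finite G] {p : ℕ} [Fact p.Prime]

theorem prime_mul_card_le_card_of_lt (hG : IsPGroup p G) {H K : Subgroup G} (h : H < K) :
    p * Nat.card H ≤ Nat.card K := by
  have hp : p.Prime := Fact.out
  obtain ⟨a, ha⟩ := (hG.to_subgroup H).exists_card_eq
  obtain ⟨b, hb⟩ := (hG.to_subgroup K).exists_card_eq
  have hlt : Nat.card H < Nat.card K :=
    lt_of_not_ge fun hge => h.ne (Subgroup.eq_of_le_of_card_ge h.le hge)
  rw [ha, hb] at hlt ⊢
  rw [← pow_succ']
  exact Nat.pow_le_pow_right hp.pos ((Nat.pow_lt_pow_iff_right hp.one_lt).1 hlt)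

theorem prime_pow_mul_card_inf_upperCentralSeries_le (hG : IsPGroup p G) {N : Subgroup G} [N.Normal]
    (j i : ℕ) (h : ∀ m < j + i, ¬ N ≤ Subgroup.upperCentralSeries G m) :
    p ^ i * Nat.card ↥(N ⊓ Subgroup.upperCentralSeries G j) ≤
      Nat.card ↥(N ⊓ Subgroup.upperCentralSeries G (j + i)) := by
  have := hG.isNilpotent
  induction i with
  | zero => simp
  | succ i ih =>
    calc p ^ (i + 1) * Nat.card ↥(N ⊓ Subgroup.upperCentralSeries G j)
        = p * (p ^ i * Nat.card ↥(N ⊓ Subgroup.upperCentralSeries G j)) := by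
          rw [pow_succ', mul_assoc]
      _ ≤ p * Nat.card ↥(N ⊓ Subgroup.upperCentralSeries G (j + i)) :=
          Nat.mul_le_mul_left p (ih fun m hm => h m (hm.trans (Nat.lt_succ_self _)))
      _ ≤ Nat.card ↥(N ⊓ Subgroup.upperCentralSeries G (j + (i + 1))) :=
          prime_mul_card_le_card_of_lt hG (inf_upperCentralSeries_lt_inf_succ (h _ (by omega)))

theorem prime_sq_le_index_upperCentralSeries (hG : IsPGroup p G) {m : ℕ}
    (h : Subgroup.upperCentralSeries G (m + 1) ≠ ⊤) :
    p ^ 2 ≤ (Subgroup.upperCentralSeries G (m + 1)).index := by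
  have hp : p.Prime := Fact.out
  obtain ⟨r, hr⟩ := hG.index (Subgroup.upperCentralSeries G (m + 1))
  rw [hr]
  refine Nat.pow_le_pow_right hp.pos (not_lt.1 fun hlt => h ?_)
  have : IsCyclic (G ⧸ Subgroup.upperCentralSeries G (m + 1)) := isCyclic_of_card_dvd_prime (p := p)
    ((hr ▸ pow_dvd_pow p (Nat.le_of_lt_succ hlt)).trans (pow_one p).dvd)
  exact upperCentralSeries_succ_eq_top_of_isCyclic_quotient

end UpperCentralSeries

/-- A group of order `p ^ n` and nilpotency class `n - 1`, where `n ≥ 2`; this is the notion of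
`p`-group of maximal class, stated without subtraction in terms of the class. -/
def IsMaximalClass (p : ℕ) (G : Type*) [Group G] : Prop :=
  Nat.card G = p ^ (Group.nilpotencyClass G + 1)

namespace IsMaximalClass

variable {p : ℕ} {G : Type*} [Group G]

theorem isPGroup (hG : IsMaximalClass p G) : IsPGroup p G :=
  IsPGroup.of_card hG

variable [hp : Fact p.Prime]

theorem finite (hG : IsMaximalClass p G) : Finite G :=
  Nat.finite_of_card_ne_zero (hG ▸ pow_ne_zero _ hp.out.ne_zero)

theorem isNilpotent (hG : IsMaximalClass p G) : Group.IsNilpotent G :=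
  have := hG.finite
  hG.isPGroup.isNilpotent

theorem upperCentralSeries_ne_top (hG : IsMaximalClass p G) {m : ℕ}
    (hm : m < Group.nilpotencyClass G) : Subgroup.upperCentralSeries G m ≠ ⊤ :=
  have := hG.isNilpotent
  fun h => hm.not_ge (Subgroup.upperCentralSeries_eq_top_iff_nilpotencyClass_le.1 h)

theorem card_upperCentralSeries (hG : IsMaximalClass p G) {j : ℕ}
    (hj : j < Group.nilpotencyClass G) :
    Nat.card (Subgroup.upperCentralSeries G j) = p ^ j := by
  have := hG.finite
  obtain ⟨i, hi⟩ := Nat.exists_eq_add_of_lt hj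
  have growth (a b : ℕ) (hab : a + b ≤ j + i) :
      p ^ b * Nat.card (Subgroup.upperCentralSeries G a) ≤
        Nat.card (Subgroup.upperCentralSeries G (a + b)) := by
    simpa only [top_inf_eq] using
      prime_pow_mul_card_inf_upperCentralSeries_le hG.isPGroup (N := ⊤) a b fun m hm h =>
        hG.upperCentralSeries_ne_top (by omega) (top_le_iff.1 h)
  refine le_antisymm ?_ (by simpa using growth 0 j (by omega))
  obtain rfl | hj0 := eq_or_ne j 0
  · simp
  obtain ⟨m, hm⟩ := Nat.exists_eq_succ_of_ne_zero (n := j + i) (by omega)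
  have hindex : p ^ 2 ≤ (Subgroup.upperCentralSeries G (j + i)).index :=
    hm ▸ prime_sq_le_index_upperCentralSeries hG.isPGroup
      (hG.upperCentralSeries_ne_top (by omega))
  refine Nat.le_of_mul_le_mul_left (c := p ^ (i + 2)) ?_ (pow_pos hp.out.pos _)
  calc p ^ (i + 2) * Nat.card (Subgroup.upperCentralSeries G j)
      = p ^ i * Nat.card (Subgroup.upperCentralSeries G j) * p ^ 2 := by ring
    _ ≤ Nat.card (Subgroup.upperCentralSeries G (j + i)) *
          (Subgroup.upperCentralSeries G (j + i)).index :=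
        Nat.mul_le_mul (growth j i le_rfl) hindex
    _ = p ^ (i + 2) * p ^ j := by
        rw [Subgroup.card_mul_index, hG, hi]
        ring

theorem index_upperCentralSeries (hG : IsMaximalClass p G) {j : ℕ}
    (hj : j < Group.nilpotencyClass G) :
    (Subgroup.upperCentralSeries G j).index = p ^ (Group.nilpotencyClass G + 1 - j) := by
  refine Nat.eq_of_mul_eq_mul_left (pow_pos hp.out.pos j) ?_
  rw [← pow_add, Nat.add_sub_cancel' (hj.le.trans (Nat.le_succ _)), ← hG,
    ← Subgroup.card_mul_index, hG.card_upperCentralSeries hj]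

theorem eq_upperCentralSeries (hG : IsMaximalClass p G) {N : Subgroup G} [N.Normal] {j : ℕ}
    (hj : j + 1 < Group.nilpotencyClass G) (hle : Subgroup.upperCentralSeries G j ≤ N)
    (hnle : ¬ Subgroup.upperCentralSeries G (j + 1) ≤ N) :
    N = Subgroup.upperCentralSeries G j := by
  have := hG.finite
  have := hG.isNilpotent
  refine hle.antisymm' (not_not.1 fun h => hnle ?_)
  have hlt := inf_upperCentralSeries_lt_inf_succ h
  rw [inf_eq_right.2 hle] at hlt
  have hcard : Nat.card (Subgroup.upperCentralSeries G (j + 1)) ≤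
      Nat.card ↥(N ⊓ Subgroup.upperCentralSeries G (j + 1)) := by
    rw [hG.card_upperCentralSeries hj, pow_succ',
      ← hG.card_upperCentralSeries (j.lt_succ_self.trans hj)]
    exact prime_mul_card_le_card_of_lt hG.isPGroup hlt
  exact inf_eq_right.1 (Subgroup.eq_of_le_of_card_ge inf_le_right hcard)

theorem index_commutator_le (hG : IsMaximalClass p G) : (commutator G).index ≤ p ^ 2 := by
  have := hG.finite
  have := hG.isNilpotent
  have hcard : p ^ (Group.nilpotencyClass G - 1) ≤ Nat.card (commutator G) := by
    have := prime_pow_mul_card_inf_upperCentralSeries_le hG.isPGroup (N := commutator G) 0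
      (Group.nilpotencyClass G - 1) fun m hm h => hG.upperCentralSeries_ne_top
        (by omega) (upperCentralSeries_succ_eq_top_of_commutator_le h)
    rw [Subgroup.upperCentralSeries_zero, inf_bot_eq, Subgroup.card_bot, mul_one] at this
    exact this.trans (Subgroup.card_le_of_le inf_le_left)
  refine Nat.le_of_mul_le_mul_left (c := p ^ (Group.nilpotencyClass G - 1)) ?_
    (pow_pos hp.out.pos _)
  calc p ^ (Group.nilpotencyClass G - 1) * (commutator G).index
      ≤ Nat.card (commutator G) * (commutator G).index := Nat.mul_le_mul_right _ hcard
    _ = p ^ (Group.nilpotencyClass G + 1) := by rw [Subgroup.card_mul_index, hG]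
    _ ≤ p ^ (Group.nilpotencyClass G - 1) * p ^ 2 := by
        rw [← pow_add]
        exact Nat.pow_le_pow_right hp.out.pos (by omega)

end IsMaximalClass

section Characters

variable {G : Type} [Group G]

theorem repKer_eq_ker (V : FDRep ℂ G) : repKer V = MonoidHom.ker V.ρ := by
  ext g
  exact ⟨fun h => congrArg Units.val h, fun h => Units.ext h⟩

theorem repDegree_eq_one_iff (V : FDRep ℂ G) [Simple V] :
    repDegree V = 1 ↔ commutator G ≤ repKer V := by
  have := isIrreducible_of_simple V
  rw [repKer_eq_ker]
  exact finrank_eq_one_iff_commutator_le_ker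

theorem codegree_eq_prime_pow {p : ℕ} (hp : p.Prime) {V : FDRep ℂ G} {i e : ℕ}
    (hindex : (repKer V).index = p ^ (i + e)) (hdeg : repDegree V = p ^ e) :
    codegree V = p ^ i := by
  rw [codegree, hindex, hdeg, pow_add, Nat.mul_div_cancel _ (pow_pos hp.pos e)]

theorem one_mem_codSet (G : Type) [Group G] : 1 ∈ codSet G := by
  let V : FDRep ℂ G := FDRep.of (Representation.trivial ℂ G ℂ)
  have hV : finrank ℂ V = 1 := finrank_self ℂ
  have := isIrreducible_of_finrank_eq_one V.ρ hV
  have hker : repKer V = ⊤ := by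
    rw [repKer_eq_ker]
    exact (Subgroup.eq_top_iff' _).2 fun _ => rfl
  refine ⟨V, simple_of_isIrreducible V, ?_⟩
  rw [codegree, hker, Subgroup.index_top, repDegree, hV]

theorem exists_simple_le_repKer_notMem [Finite G] (N : Subgroup G) [N.Normal] {g : G} (hg : g ∉ N) :
    ∃ V : FDRep ℂ G, Simple V ∧ N ≤ repKer V ∧ g ∉ repKer V := by
  obtain ⟨ρ, τ, hτ, hN, hgτ⟩ := exists_isIrreducible_le_ker_notMem ℂ N hg
  have : Representation.IsIrreducible (FDRep.of τ.toRepresentation).ρ := hτ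
  refine ⟨FDRep.of τ.toRepresentation, simple_of_isIrreducible _, ?_⟩
  rw [repKer_eq_ker]
  exact ⟨hN, hgτ⟩

variable {p : ℕ} [hp : Fact p.Prime]

theorem exists_index_repKer_eq {n : ℕ} (hcard : Nat.card G = p ^ n) (V : FDRep ℂ G) :
    ∃ a ≤ n, (repKer V).index = p ^ a :=
  (Nat.dvd_prime_pow hp.out).1 (hcard ▸ (repKer V).index_dvd_card)

theorem repDegree_ne_prime_sq_of_repKer_le [Finite G] (hG : IsPGroup p G)
    {V W : FDRep ℂ G} [Simple V] [Simple W] (hdeg : repDegree V = p)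
    (hker : repKer V ≤ repKer W) : repDegree W ≠ p ^ 2 := by
  have := isIrreducible_of_simple V
  have := isIrreducible_of_simple W
  rw [repKer_eq_ker, repKer_eq_ker] at hker
  exact ((finrank_le_of_ker_le_of_finrank_eq_prime hG hdeg hker).trans_lt
    (lt_self_pow₀ hp.out.one_lt one_lt_two)).ne

theorem repDegree_le_prime_pow_sub_two {V : FDRep ℂ G} [Simple V] {a : ℕ}
    (hindex : (repKer V).index = p ^ a) : repDegree V ≤ p ^ (a - 2) := by
  have := isIrreducible_of_simple V
  rw [repKer_eq_ker] at hindex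
  exact finrank_le_prime_pow_sub_two hindex

theorem add_two_le_of_repDegree_eq_prime_pow {V : FDRep ℂ G} [Simple V] {a e : ℕ}
    (hindex : (repKer V).index = p ^ a) (hdeg : repDegree V = p ^ e) (he : e ≠ 0) :
    e + 2 ≤ a := by
  have := (Nat.pow_le_pow_iff_right hp.out.one_lt).1
    (hdeg ▸ repDegree_le_prime_pow_sub_two hindex)
  omega

theorem four_le_of_prime_sq_mem_cdSet {n : ℕ} (hcard : Nat.card G = p ^ n)
    (h : p ^ 2 ∈ cdSet G) : 4 ≤ n := by
  obtain ⟨V, _, hdeg⟩ := h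
  obtain ⟨a, ha, hindex⟩ := exists_index_repKer_eq hcard V
  exact (add_two_le_of_repDegree_eq_prime_pow hindex hdeg two_ne_zero).trans ha

theorem prime_mem_codSet [Finite G] [Nontrivial G] (hG : IsPGroup p G) : p ∈ codSet G := by
  obtain ⟨N, hN, hindex⟩ := exists_normal_index_eq_prime hG
  obtain ⟨g, hg⟩ : ∃ g, g ∉ N := by
    by_contra! h
    exact hp.out.ne_one (hindex ▸ Subgroup.index_eq_one.2 ((Subgroup.eq_top_iff' N).2 h))
  obtain ⟨V, hV, hle, hgV⟩ := exists_simple_le_repKer_notMem N hg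
  have hker : (repKer V).index = p ^ 1 := by
    rw [pow_one]
    have hdvd : (repKer V).index ∣ p := hindex ▸ Subgroup.index_dvd_of_le hle
    exact ((Nat.dvd_prime hp.out).1 hdvd).resolve_left fun h =>
      hgV (Subgroup.index_eq_one.1 h ▸ Subgroup.mem_top g)
  have hdeg : repDegree V = p ^ 0 := by
    have := isIrreducible_of_simple V
    have := nontrivial_of_isIrreducible V.ρ
    exact (repDegree_le_prime_pow_sub_two hker).antisymm finrank_pos
  exact ⟨V, hV, (codegree_eq_prime_pow hp.out hker hdeg).trans (pow_one p)⟩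

end Characters

namespace IsMaximalClass

variable {p : ℕ} [hp : Fact p.Prime] {G : Type} [Group G]

theorem exists_simple_repKer_eq_upperCentralSeries (hG : IsMaximalClass p G) {j : ℕ}
    (hj : j + 1 < Group.nilpotencyClass G) :
    ∃ V : FDRep ℂ G, Simple V ∧ repKer V = Subgroup.upperCentralSeries G j := by
  have := hG.finite
  obtain ⟨g, hg, hgj⟩ := SetLike.exists_of_lt <| Subgroup.upperCentralSeries.StrictMonoOn G
    (Set.mem_Iic.2 (j.le_succ.trans hj.le)) (Set.mem_Iic.2 hj.le) j.lt_succ_self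
  obtain ⟨V, hV, hle, hgV⟩ := exists_simple_le_repKer_notMem _ hgj
  have : (repKer V).Normal := inferInstanceAs (MonoidHom.ker _).Normal
  exact ⟨V, hV, hG.eq_upperCentralSeries hj hle fun h => hgV (h hg)⟩

theorem index_repKer_le_of_repDegree_eq_one (hG : IsMaximalClass p G) {V : FDRep ℂ G} [Simple V]
    (hV : repDegree V = 1) : (repKer V).index ≤ p ^ 2 := by
  have := hG.finite
  exact (Nat.le_of_dvd (Nat.pos_of_ne_zero Subgroup.index_ne_zero_of_finite)
    (Subgroup.index_dvd_of_le ((repDegree_eq_one_iff V).1 hV))).trans hG.index_commutator_le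

theorem exists_codegree_eq (hG : IsMaximalClass p G) (hcd : cdSet G = {1, p, p ^ 2})
    (V : FDRep ℂ G) [Simple V] : ∃ i ≤ Group.nilpotencyClass G - 1, codegree V = p ^ i := by
  have := hG.finite
  obtain ⟨a, ha, hindex⟩ := exists_index_repKer_eq hG V
  have hsq : p ^ 2 ∈ cdSet G := by simp [hcd]
  have hc := four_le_of_prime_sq_mem_cdSet hG hsq
  obtain hdeg | hdeg | hdeg : repDegree V ∈ ({1, p, p ^ 2} : Set ℕ) := hcd ▸ ⟨V, ‹_›, rfl⟩
  · have ha2 : a ≤ 2 := (Nat.pow_le_pow_iff_right hp.out.one_lt).1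
      (hindex ▸ hG.index_repKer_le_of_repDegree_eq_one hdeg)
    exact ⟨a, by omega, codegree_eq_prime_pow hp.out (e := 0) hindex hdeg⟩
  · have hdeg' : repDegree V = p ^ 1 := hdeg.trans (pow_one p).symm
    have ha3 := add_two_le_of_repDegree_eq_prime_pow hindex hdeg' one_ne_zero
    have hne : a ≠ Group.nilpotencyClass G + 1 := by
      rintro rfl
      have hbot : repKer V = ⊥ := (repKer V).eq_bot_of_card_eq <|
        Nat.eq_of_mul_eq_mul_right (pow_pos hp.out.pos _) <|
          (hindex ▸ (repKer V).card_mul_index).trans (hG.trans (one_mul _).symm)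
      obtain ⟨W, _, hWdeg⟩ := hsq
      exact repDegree_ne_prime_sq_of_repKer_le hG.isPGroup hdeg (hbot ▸ bot_le) hWdeg
    refine ⟨a - 1, by omega, codegree_eq_prime_pow hp.out ?_ hdeg'⟩
    rw [hindex, Nat.sub_add_cancel (by omega)]
  · have ha4 := add_two_le_of_repDegree_eq_prime_pow hindex hdeg two_ne_zero
    refine ⟨a - 2, by omega, codegree_eq_prime_pow hp.out ?_ hdeg⟩
    rw [hindex, Nat.sub_add_cancel (by omega)]

theorem exists_simple_index_repKer_eq (hG : IsMaximalClass p G) {a : ℕ} (ha : 3 ≤ a)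
    (hac : a ≤ Group.nilpotencyClass G + 1) :
    ∃ V : FDRep ℂ G, Simple V ∧ repDegree V ≠ 1 ∧ (repKer V).index = p ^ a ∧
      repKer V = Subgroup.upperCentralSeries G (Group.nilpotencyClass G + 1 - a) := by
  obtain ⟨V, hV, hker⟩ := hG.exists_simple_repKer_eq_upperCentralSeries
    (j := Group.nilpotencyClass G + 1 - a) (by omega)
  have hindex : (repKer V).index = p ^ a := by
    rw [hker, hG.index_upperCentralSeries (by omega), Nat.sub_sub_self hac]
  refine ⟨V, hV, fun hdeg => ?_, hindex, hker⟩
  have := (Nat.pow_le_pow_iff_right hp.out.one_lt).1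
    (hindex ▸ hG.index_repKer_le_of_repDegree_eq_one hdeg)
  omega

theorem prime_pow_mem_codSet (hG : IsMaximalClass p G) (hcd : cdSet G ⊆ {1, p, p ^ 2}) {i : ℕ}
    (hi : 2 ≤ i) (hic : i ≤ Group.nilpotencyClass G - 1) : p ^ i ∈ codSet G := by
  have := hG.finite
  obtain ⟨V, hV, hV1, hVindex, hVker⟩ := hG.exists_simple_index_repKer_eq (a := i + 1)
    (by omega) (by omega)
  obtain ⟨W, hW, hW1, hWindex, hWker⟩ := hG.exists_simple_index_repKer_eq (a := i + 2)
    (by omega) (by omega)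
  obtain hVp | hVp := (hcd ⟨V, hV, rfl⟩).resolve_left hV1
  · exact ⟨V, hV, codegree_eq_prime_pow hp.out hVindex (hVp.trans (pow_one p).symm)⟩
  · have hle : repKer W ≤ repKer V := by
      rw [hVker, hWker]
      exact Subgroup.upperCentralSeries_mono G (by omega)
    have hWp : repDegree W = p ^ 2 := ((hcd ⟨W, hW, rfl⟩).resolve_left hW1).resolve_left
      fun h => repDegree_ne_prime_sq_of_repKer_le hG.isPGroup h hle hVp
    exact ⟨W, hW, codegree_eq_prime_pow hp.out hWindex hWp⟩

end IsMaximalClass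

/-- A maximal class `p`-group of order `p^n` with `cd(G) = {1, p, p^2}` has
`cod(G) = {p^i | 0 ≤ i ≤ n-2}`. -/
theorem maximal_class_cd_one_p_psq (p n : ℕ) (hp : p.Prime) (G : Type) [Group G] [Fintype G]
    (hcard : Fintype.card G = p ^ n) (hmax : nilClass G = n - 1)
    (hcd : cdSet G = {1, p, p ^ 2}) :
    codSet G = {m | ∃ i ≤ n - 2, m = p ^ i} := by
  have : Fact p.Prime := ⟨hp⟩
  rw [← Nat.card_eq_fintype_card] at hcard
  have hn : 4 ≤ n := four_le_of_prime_sq_mem_cdSet hcard (by simp [hcd])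
  have hpG : IsPGroup p G := IsPGroup.of_card hcard
  have : Nontrivial G := hpG.nontrivial_iff_card.2 ⟨n, by omega, hcard⟩
  have := hpG.isNilpotent
  rw [nilClass_eq_nilpotencyClass] at hmax
  have hG : IsMaximalClass p G := by rw [IsMaximalClass, hcard, hmax, Nat.sub_add_cancel (by omega)]
  rw [show n - 2 = Group.nilpotencyClass G - 1 by omega]
  ext m
  constructor
  · rintro ⟨V, _, rfl⟩
    exact hG.exists_codegree_eq hcd V
  · rintro ⟨i, hi, rfl⟩
    obtain rfl | rfl | hi2 : i = 0 ∨ i = 1 ∨ 2 ≤ i := by omega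
    · simpa only [pow_zero] using one_mem_codSet G
    · simpa only [pow_one] using prime_mem_codSet hpG
    · exact hG.prime_pow_mem_codSet hcd.subset hi2 hi
end

section
/- Let p be a prime and let G be a finite p-group with |G| = p^n, n ≥ 4, of nilpotence class exactly 2, such that cod(G) = {p^i | 0 ≤ i ≤ n-1}. Then the derived subgroup G' has order p, the center Z(G) is cyclic of index p^2 in G, and G is isomorphic to a semidirect product Z_{p^{n-1}} ⋊ Z_p (in particular G has an element of order p^{n-1} generating a subgroup of index p, complemented by a subgroup of order p). -/
open CategoryTheory

/-!
If `G' ≤ Z(G)` and `χ` is irreducible, then `χ` vanishes outside its centre `Z(χ)`, so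
`|G : Z(χ)| = χ(1) ^ 2`. A character of codegree `p ^ (n - 1)` satisfies `χ(1) * |ker χ| = p`; it
cannot be linear, because then `ker χ` would be central with cyclic quotient, so it is faithful of
degree `p`, and `Z(G) = Z(χ)` is cyclic of index `p ^ 2`. Commutators therefore have order dividing
`p` in a cyclic group, whence `|G'| = p` and `G'` lies in every nontrivial normal subgroup.

A character of codegree `p ^ (n - 2)` satisfies `χ(1) * |ker χ| = p ^ 2` and is not faithful, since
`|G : Z(χ)|` divides `|G : Z(G)| = p ^ 2`. Hence `G' ≤ ker χ`, so `χ` is linear and `K = ker χ` has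
order `p ^ 2` with `G / K` cyclic. A lift `g` of a generator of `G / K` satisfies `g ^ p ≠ 1`
because `n ≥ 4`; this forces `G' ≤ ⟨g⟩`, hence `|G : ⟨g⟩| = p` and `Z(G) = ⟨g ^ p⟩`. For
`x ∈ K \ ⟨g⟩` the element `x ^ p` is central of order dividing `p`, hence the `p`-th power of some
`c ∈ Z(G)`, and `x * c⁻¹` generates a complement of `⟨g⟩`.
-/

open Subgroup
open scoped commutatorElement

section NilpotencyClass

variable {G : Type} [Group G]

theorem commutator_le_center_of_nilClass_eq_two (h : nilClass G = 2) :
    commutator G ≤ center G := by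
  have hmem : nilClass G ∈ {n | Subgroup.upperCentralSeries G n = ⊤} :=
    Nat.sInf_mem (Nat.nonempty_of_sInf_eq_succ h)
  have htop : Subgroup.upperCentralSeries G 2 = ⊤ := h ▸ hmem
  rw [commutator_def, commutator_le]
  intro x _ y _
  rw [← Subgroup.upperCentralSeries_one]
  exact Subgroup.mem_upperCentralSeries_succ_iff.1 (htop ▸ mem_top x) y

theorem center_ne_top_of_nilClass_eq_two (h : nilClass G = 2) : center G ≠ ⊤ := by
  intro htop
  have hle : nilClass G ≤ 1 := Nat.sInf_le ((Subgroup.upperCentralSeries_one G).trans htop)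
  omega

end NilpotencyClass

section Cyclic

variable {C : Type*} [Group C] [IsCyclic C]

theorem exists_pow_eq_of_isCyclic {d e : ℕ} (he : e ≠ 0) (hcard : d * e ∣ Nat.card C) {z : C}
    (hz : z ^ e = 1) : ∃ c : C, c ^ d = z := by
  obtain ⟨g, hg⟩ := IsCyclic.exists_generator (α := C)
  obtain ⟨k, rfl⟩ := hg z
  have hdvd : (Nat.card C : ℤ) ∣ k * e := by
    rwa [← orderOf_eq_card_of_forall_mem_zpowers hg, orderOf_dvd_iff_zpow_eq_one, zpow_mul,
      zpow_natCast]
  have hde : (d : ℤ) * e ∣ k * e := dvd_trans (mod_cast hcard) hdvd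
  obtain ⟨j, rfl⟩ := Int.dvd_of_mul_dvd_mul_right (mod_cast he) hde
  exact ⟨g ^ j, by rw [← zpow_natCast, ← zpow_mul, mul_comm]⟩

theorem mem_iff_pow_card_eq_one_of_isCyclic [Finite C] (B : Subgroup C) {x : C} :
    x ∈ B ↔ x ^ Nat.card B = 1 := by
  let : CommGroup C := IsCyclic.commGroup
  have hle : B ≤ (powMonoidHom (Nat.card B) : C →* C).ker := fun y hy ↦
    congrArg Subtype.val (pow_card_eq_one' (x := (⟨y, hy⟩ : B)))
  have heq : B = (powMonoidHom (Nat.card B) : C →* C).ker :=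
    eq_of_le_of_card_ge hle <| (IsCyclic.card_powMonoidHom_ker C _).trans_le <|
      Nat.gcd_le_right _ Nat.card_pos
  exact ⟨fun hx ↦ hle hx, fun hx ↦ heq ▸ hx⟩

end Cyclic

theorem le_of_card_dvd_card_of_isCyclic {G : Type*} [Group G] [Finite G] {A B C : Subgroup G}
    [IsCyclic C] (hA : A ≤ C) (hB : B ≤ C) (h : Nat.card A ∣ Nat.card B) : A ≤ B := by
  intro x hx
  have hpow : x ^ Nat.card B = 1 :=
    orderOf_dvd_iff_pow_eq_one.1 ((A.orderOf_dvd_natCard hx).trans h)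
  rw [← Nat.card_congr (subgroupOfEquivOfLe hB).toEquiv] at hpow
  have hmem : (⟨x, hA hx⟩ : C) ∈ B.subgroupOf C :=
    (mem_iff_pow_card_eq_one_of_isCyclic _).2 (Subtype.ext hpow)
  exact hmem

section Commutator

variable {G : Type*} [Group G]

theorem commutatorElement_pow_left {x y : G} (h : ⁅x, y⁆ ∈ center G) (m : ℕ) :
    ⁅x ^ m, y⁆ = ⁅x, y⁆ ^ m := by
  induction m with
  | zero => simp
  | succ m ih =>
    rw [pow_succ, commutatorElement_mul_left_eq_conj_mul, ih, pow_succ',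
      (mem_center_iff.1 h (x ^ m)), mul_inv_cancel_right]

theorem exists_commutatorElement_ne_one (h : center G ≠ ⊤) : ∃ x y : G, ⁅x, y⁆ ≠ 1 := by
  contrapose! h
  exact (eq_top_iff' _).2 fun x ↦ mem_center_iff.2 fun y ↦
    commutatorElement_eq_one_iff_mul_comm.1 (h y x)

theorem inf_center_ne_bot (hG : commutator G ≤ center G) {N : Subgroup G} [N.Normal]
    (hN : N ≠ ⊥) : N ⊓ center G ≠ ⊥ := by
  intro hbot
  have hcomm : ⁅N, (⊤ : Subgroup G)⁆ ≤ N ⊓ center G :=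
    le_inf (commutator_le_left N ⊤) ((commutator_mono le_top le_rfl).trans hG)
  have hle : N ≤ center G :=
    commutator_top_right_eq_bot_iff_le_center.1 (le_bot_iff.1 (hbot ▸ hcomm))
  exact hN (by rwa [inf_eq_left.2 hle] at hbot)

end Commutator

section Supplement

variable {G : Type*} [Group G]

theorem exists_zpowers_sup_eq_top (K : Subgroup G) [K.Normal]
    [IsCyclic (G ⧸ K)] : ∃ g : G, zpowers g ⊔ K = ⊤ := by
  obtain ⟨q, hq⟩ := isCyclic_iff_exists_zpowers_eq_top.1 ‹IsCyclic (G ⧸ K)›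
  obtain ⟨g, rfl⟩ := QuotientGroup.mk_surjective q
  refine ⟨g, ?_⟩
  have hmap : (zpowers g).map (QuotientGroup.mk' K) = ⊤ := by rwa [MonoidHom.map_zpowers]
  rw [← comap_top (QuotientGroup.mk' K), ← hmap, comap_map_eq, QuotientGroup.ker_mk']

theorem card_dvd_card_mul_card_of_sup_eq_top {H K : Subgroup G} [K.Normal]
    (h : H ⊔ K = ⊤) : Nat.card G ∣ Nat.card H * Nat.card K := by
  rw [← K.index_mul_card, ← relIndex_top_right, ← h, relIndex_sup_right]
  exact mul_dvd_mul_right (relIndex_dvd_card K H) _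

end Supplement

section CenterIndexPrimeSq

variable {G : Type*} [Group G] {p : ℕ} [hp : Fact p.Prime]

theorem commutator_le_center_of_index_eq_prime_sq (hidx : (center G).index = p ^ 2) :
    commutator G ≤ center G :=
  Normal.quotient_commutative_iff_commutator_le.1 <|
    IsPGroup.isMulCommutative_of_card_eq_prime_sq (p := p) hidx

theorem center_ne_top_of_index_eq_prime_sq (hidx : (center G).index = p ^ 2) : center G ≠ ⊤ := by
  intro htop
  rw [htop, index_top] at hidx
  exact (Nat.one_lt_pow two_ne_zero hp.out.one_lt).ne hidx

theorem pow_mem_center_of_index_eq_prime_sq (hidx : (center G).index = p ^ 2) (x : G) :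
    x ^ p ∈ center G := by
  rw [← QuotientGroup.eq_one_iff, QuotientGroup.mk_pow, ← orderOf_dvd_iff_pow_eq_one]
  have hdvd : orderOf (x : G ⧸ center G) ∣ p ^ 2 := hidx ▸ orderOf_dvd_natCard _
  obtain ⟨k, hk, hord⟩ := (Nat.dvd_prime_pow hp.out).1 hdvd
  have hk2 : k ≠ 2 := by
    rintro rfl
    have : Finite (G ⧸ center G) :=
      Nat.finite_of_card_ne_zero (hidx.trans_ne (pow_ne_zero 2 hp.out.ne_zero))
    have : IsCyclic (G ⧸ center G) := isCyclic_of_orderOf_eq_card _ (hord.trans hidx.symm)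
    exact center_ne_top_of_index_eq_prime_sq hidx <|
      center_eq_top_iff.2 (isMulCommutative_of_isCyclic_quotient_center_self G)
  rw [hord]
  exact (pow_dvd_pow p (by omega : k ≤ 1)).trans (pow_one p).dvd

theorem commutatorElement_mem_center_of_index_eq_prime_sq (hidx : (center G).index = p ^ 2)
    (x y : G) : ⁅x, y⁆ ∈ center G :=
  commutator_le_center_of_index_eq_prime_sq hidx <|
    commutator_mem_commutator (mem_top x) (mem_top y)

theorem commutatorElement_pow_eq_one (hidx : (center G).index = p ^ 2) (x y : G) :
    ⁅x, y⁆ ^ p = 1 := by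
  rw [← commutatorElement_pow_left (commutatorElement_mem_center_of_index_eq_prime_sq hidx x y),
    commutatorElement_eq_one_iff_mul_comm]
  exact (mem_center_iff.1 (pow_mem_center_of_index_eq_prime_sq hidx x) y).symm

theorem card_commutator_eq_prime [Finite G] [IsCyclic (center G)]
    (hidx : (center G).index = p ^ 2) : Nat.card (commutator G) = p := by
  have hcenter := commutatorElement_mem_center_of_index_eq_prime_sq hidx
  have hpow := commutatorElement_pow_eq_one hidx
  obtain ⟨x, y, hxy⟩ := exists_commutatorElement_ne_one (center_ne_top_of_index_eq_prime_sq hidx)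
  have hcard : Nat.card (zpowers ⁅x, y⁆) = p :=
    (Nat.card_zpowers _).trans (orderOf_eq_prime (hpow x y) hxy)
  have hle : commutator G ≤ zpowers ⁅x, y⁆ := by
    rw [commutator_def, commutator_le]
    intro a _ b _
    have hdvd : Nat.card (zpowers ⁅a, b⁆) ∣ Nat.card (zpowers ⁅x, y⁆) := by
      rw [hcard, Nat.card_zpowers]
      exact orderOf_dvd_of_pow_eq_one (hpow a b)
    exact zpowers_le.1 <| le_of_card_dvd_card_of_isCyclic (zpowers_le.2 (hcenter a b))
      (zpowers_le.2 (hcenter x y)) hdvd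
  have hge : zpowers ⁅x, y⁆ ≤ commutator G :=
    zpowers_le.2 (commutator_mem_commutator (mem_top x) (mem_top y))
  rw [le_antisymm hle hge, hcard]

theorem commutator_le_of_inf_center_ne_bot [Finite G] (hG : IsPGroup p G) [IsCyclic (center G)]
    (hidx : (center G).index = p ^ 2) {N : Subgroup G} (hN : N ⊓ center G ≠ ⊥) :
    commutator G ≤ N := by
  have hdvd : Nat.card (commutator G) ∣ Nat.card (N ⊓ center G : Subgroup G) := by
    rw [card_commutator_eq_prime hidx]
    exact (hG.to_subgroup _).card_eq_or_dvd.resolve_left (mt card_eq_one.1 hN)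
  exact (le_of_card_dvd_card_of_isCyclic (commutator_le_center_of_index_eq_prime_sq hidx)
    inf_le_right hdvd).trans inf_le_left

theorem pow_ne_one_of_zpowers_sup_eq_top (hidx : (center G).index = p ^ 2)
    (hZ : p ^ 2 ∣ Nat.card (center G)) {K : Subgroup G} [K.Normal] (hK : Nat.card K = p ^ 2)
    {g : G} (hg : zpowers g ⊔ K = ⊤) : g ^ p ≠ 1 := by
  intro h
  have hdvd := card_dvd_card_mul_card_of_sup_eq_top hg
  rw [← (center G).card_mul_index, hidx, hK, Nat.card_zpowers] at hdvd
  have hp2 : p ^ 2 ∣ p ^ 1 := calc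
    p ^ 2 ∣ Nat.card (center G) := hZ
    _ ∣ orderOf g := Nat.dvd_of_mul_dvd_mul_right (pow_pos hp.out.pos 2) hdvd
    _ ∣ p := orderOf_dvd_of_pow_eq_one h
    _ = p ^ 1 := (pow_one p).symm
  exact absurd ((Nat.pow_dvd_pow_iff_le_right hp.out.one_lt).1 hp2) (by decide)

theorem index_zpowers_eq_prime [Finite G] (hG : IsPGroup p G) [IsCyclic (center G)]
    (hidx : (center G).index = p ^ 2) (hZ : p ^ 2 ∣ Nat.card (center G)) {K : Subgroup G}
    (hGK : commutator G ≤ K) (hK : Nat.card K = p ^ 2) {g : G} (hg : zpowers g ⊔ K = ⊤) :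
    (zpowers g).index = p := by
  have : K.Normal := .of_commutator_le _ hGK
  have hgp : g ^ p ≠ 1 := pow_ne_one_of_zpowers_sup_eq_top hidx hZ hK hg
  have hGH : commutator G ≤ zpowers g := by
    refine commutator_le_of_inf_center_ne_bot hG hidx fun hbot ↦ hgp ?_
    exact mem_bot.1 (hbot ▸ mem_inf.2 ⟨npow_mem_zpowers g p,
      pow_mem_center_of_index_eq_prime_sq hidx g⟩)
  have : (zpowers g).Normal := .of_commutator_le _ hGH
  have hcomm : (commutator G).relIndex K = p := by
    have := relIndex_mul_relIndex ⊥ (commutator G) K bot_le hGK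
    rw [relIndex_bot_left, relIndex_bot_left, card_commutator_eq_prime hidx, hK, sq] at this
    exact Nat.eq_of_mul_eq_mul_left hp.out.pos this
  have hdvd : (zpowers g).index ∣ p := by
    rw [← relIndex_top_right, ← hg, relIndex_sup_left, ← hcomm]
    exact relIndex_dvd_of_le_left K hGH
  refine ((Nat.dvd_prime hp.out).1 hdvd).resolve_left fun h ↦
    center_ne_top_of_index_eq_prime_sq hidx ?_
  have : IsCyclic G := isCyclic_iff_exists_zpowers_eq_top.2 ⟨g, index_eq_one.1 h⟩
  exact center_eq_top_iff.2 inferInstance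

theorem center_le_zpowers_of_index_eq_prime [Finite G] (hidx : (center G).index = p ^ 2) {g : G}
    (hg : (zpowers g).index = p) : center G ≤ zpowers g := by
  have hord : orderOf g = Nat.card (center G) * p := by
    have hmul := (zpowers g).card_mul_index.trans (center G).card_mul_index.symm
    rw [hg, hidx, sq, ← mul_assoc, Nat.card_zpowers] at hmul
    exact Nat.eq_of_mul_eq_mul_right hp.out.pos hmul
  have hcard : Nat.card (zpowers (g ^ p)) = Nat.card (center G) := by
    rw [Nat.card_zpowers, orderOf_pow_of_dvd hp.out.ne_zero (hord ▸ dvd_mul_left _ _), hord,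
      Nat.mul_div_cancel _ hp.out.pos]
  have heq : zpowers (g ^ p) = center G := eq_of_le_of_card_ge
    (zpowers_le.2 (pow_mem_center_of_index_eq_prime_sq hidx g)) hcard.ge
  exact heq ▸ zpowers_le.2 (npow_mem_zpowers g p)

theorem exists_orderOf_eq_prime_notMem [IsCyclic (center G)] (hidx : (center G).index = p ^ 2)
    (hZ : p ^ 2 ∣ Nat.card (center G)) {H K : Subgroup G} (hH : center G ≤ H)
    (hK : Nat.card K = p ^ 2) (hKH : ¬ K ≤ H) : ∃ h ∉ H, orderOf h = p := by
  obtain ⟨x, hxK, hxH⟩ := SetLike.not_le_iff_exists.1 hKH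
  have hxpp : (x ^ p) ^ p = 1 := by
    rw [← pow_mul, ← sq, ← hK]
    exact orderOf_dvd_iff_pow_eq_one.1 (K.orderOf_dvd_natCard hxK)
  obtain ⟨⟨c, hc⟩, hcx⟩ := exists_pow_eq_of_isCyclic hp.out.ne_zero (sq p ▸ hZ)
    (z := (⟨x ^ p, pow_mem_center_of_index_eq_prime_sq hidx x⟩ : center G)) (Subtype.ext hxpp)
  have hcp : c ^ p = x ^ p := congrArg Subtype.val hcx
  have hmem : x * c⁻¹ ∉ H := fun h ↦
    hxH ((H.mul_mem_cancel_right (H.inv_mem (hH hc))).1 h)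
  have hcomm : Commute x c⁻¹ := mem_center_iff.1 (inv_mem hc) x
  refine ⟨x * c⁻¹, hmem, orderOf_eq_prime ?_ fun h ↦ hmem (h ▸ H.one_mem)⟩
  rw [hcomm.mul_pow, inv_pow, hcp, mul_inv_cancel]

end CenterIndexPrimeSq

theorem exists_mulEquiv_semidirectProduct_of_isCyclic {G : Type*} [Group G] [Finite G] {p : ℕ}
    [hp : Fact p.Prime] (H : Subgroup G) [H.Normal] [IsCyclic H] (hH : H.index = p) {h : G}
    (hh : h ∉ H) (hord : orderOf h = p) :
    ∃ φ : Multiplicative (ZMod p) →* MulAut (Multiplicative (ZMod (Nat.card H))),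
      Nonempty (G ≃* Multiplicative (ZMod (Nat.card H)) ⋊[φ] Multiplicative (ZMod p)) := by
  have hcard : Nat.card (zpowers h) = p := (Nat.card_zpowers h).trans hord
  have : Fact (Nat.card (zpowers h)).Prime := ⟨hcard ▸ hp.out⟩
  have hdisj : Disjoint H (zpowers h) := subgroupOf_eq_bot.1 <|
    (eq_bot_or_eq_top_of_prime_card _).resolve_right fun htop ↦
      hh (zpowers_le.1 (subgroupOf_eq_top.1 htop))
  have hcompl : H.IsComplement' (zpowers h) :=
    isComplement'_of_card_mul_and_disjoint (by rw [hcard, ← hH, card_mul_index]) hdisj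
  exact ⟨_, ⟨(SemidirectProduct.mulEquivSubgroup hcompl).symm.trans <| SemidirectProduct.congr'
    (mulEquivOfCyclicCardEq (G' := Multiplicative (ZMod _)) (Nat.card_zmod _).symm)
    (mulEquivOfCyclicCardEq (G' := Multiplicative (ZMod p)) (hcard.trans (Nat.card_zmod p).symm))⟩⟩

theorem exists_mulEquiv_semidirectProduct_of_isCyclic_quotient {G : Type*} [Group G] {p n : ℕ}
    [hp : Fact p.Prime] (hcard : Nat.card G = p ^ n) (hn : 4 ≤ n) [IsCyclic (center G)]
    (hidx : (center G).index = p ^ 2) {K : Subgroup G} (hGK : commutator G ≤ K)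
    (hK : Nat.card K = p ^ 2) [K.Normal] [IsCyclic (G ⧸ K)] :
    ∃ φ : Multiplicative (ZMod p) →* MulAut (Multiplicative (ZMod (p ^ (n - 1)))),
      Nonempty (G ≃* Multiplicative (ZMod (p ^ (n - 1))) ⋊[φ] Multiplicative (ZMod p)) := by
  have : Finite G := Nat.finite_of_card_ne_zero (hcard ▸ pow_ne_zero n hp.out.ne_zero)
  have hZ : p ^ 2 ∣ Nat.card (center G) := by
    refine Nat.dvd_of_mul_dvd_mul_right (pow_pos hp.out.pos 2) ?_
    rw [← hidx, card_mul_index, hcard, hidx, ← pow_add]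
    exact pow_dvd_pow p hn
  obtain ⟨g, hg⟩ := exists_zpowers_sup_eq_top K
  have hH : (zpowers g).index = p :=
    index_zpowers_eq_prime (IsPGroup.of_card hcard) hidx hZ hGK hK hg
  have hZH : center G ≤ zpowers g := center_le_zpowers_of_index_eq_prime hidx hH
  have : (zpowers g).Normal :=
    .of_commutator_le _ ((commutator_le_center_of_index_eq_prime_sq hidx).trans hZH)
  have hKH : ¬ K ≤ zpowers g := fun hle ↦ hp.out.ne_one <| by
    rw [← hH, ← sup_eq_left.2 hle, hg, index_top]
  obtain ⟨h, hh, hord⟩ := exists_orderOf_eq_prime_notMem hidx hZ hZH hK hKH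
  have hcardH : Nat.card (zpowers g) = p ^ (n - 1) := by
    refine Nat.eq_of_mul_eq_mul_right hp.out.pos ?_
    rw [pow_sub_one_mul (by omega) p, ← hcard, ← (zpowers g).card_mul_index, hH]
  exact hcardH ▸ exists_mulEquiv_semidirectProduct_of_isCyclic (zpowers g) hH hh hord

section Representation

variable {G : Type} [Group G] (V : FDRep ℂ G)

theorem mem_repKer {g : G} : g ∈ repKer V ↔ V.ρ g = 1 := by
  rw [repKer, MonoidHom.mem_ker, ← Units.val_inj, Representation.asGroupHom_apply, Units.val_one]

instance : (repKer V).Normal :=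
  MonoidHom.normal_ker _

/-- The centre `Z(χ)` of the character `χ` of `V`: the elements of `G` whose action on `V` commutes
with the action of all of `G`; by Schur's lemma they act by scalars when `V` is irreducible. -/
noncomputable def repCenter : Subgroup G :=
  (centralizer (Representation.asGroupHom V.ρ).range).comap (Representation.asGroupHom V.ρ)

theorem mem_repCenter_iff_commutatorElement_mem {g : G} :
    g ∈ repCenter V ↔ ∀ x, ⁅g, x⁆ ∈ repKer V := by
  simp only [repCenter, repKer, mem_comap, mem_centralizer_iff, SetLike.mem_coe,
    MonoidHom.mem_range, forall_exists_index, forall_apply_eq_imp_iff, MonoidHom.mem_ker,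
    map_commutatorElement, commutatorElement_eq_one_iff_mul_comm]
  exact forall_congr' fun x ↦ eq_comm

theorem mem_repCenter {g : G} : g ∈ repCenter V ↔ ∀ x, Commute (V.ρ g) (V.ρ x) := by
  simp only [mem_repCenter_iff_commutatorElement_mem, repKer, MonoidHom.mem_ker,
    map_commutatorElement, commutatorElement_eq_one_iff_mul_comm, ← Units.val_inj, Units.val_mul,
    Representation.asGroupHom_apply, commute_iff_eq]

theorem repKer_le_repCenter : repKer V ≤ repCenter V := fun _ hg ↦
  (mem_repCenter V).2 fun x ↦ (mem_repKer V).1 hg ▸ Commute.one_left (V.ρ x)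

theorem center_le_repCenter : center G ≤ repCenter V := fun _ hg ↦
  (mem_repCenter V).2 fun x ↦ Commute.map (mem_center_iff.1 hg x).symm V.ρ

variable {V}

theorem repCenter_eq_top_iff : repCenter V = ⊤ ↔ commutator G ≤ repKer V := by
  simp only [eq_top_iff', mem_repCenter_iff_commutatorElement_mem, commutator_def, commutator_le,
    mem_top, true_implies]

theorem commutator_le_repKer_of_repDegree_eq_one (h : repDegree V = 1) :
    commutator G ≤ repKer V := by
  refine repCenter_eq_top_iff.1 <| (eq_top_iff' _).2 fun g ↦ (mem_repCenter V).2 fun x ↦ ?_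
  obtain ⟨c, hc, -⟩ := (V.ρ g).existsUnique_eq_smul_id_of_finrank_eq_one h
  exact hc ▸ (Commute.one_left (V.ρ x)).smul_left c

theorem repCenter_eq_center (h : repKer V = ⊥) : repCenter V = center G := by
  ext g
  simp only [mem_repCenter_iff_commutatorElement_mem, h, mem_bot,
    commutatorElement_eq_one_iff_mul_comm, mem_center_iff]
  exact forall_congr' fun x ↦ eq_comm

theorem eq_smul_one_of_commute [Simple V] {f : V →ₗ[ℂ] V} (hf : ∀ g, Commute f (V.ρ g)) :
    ∃ c : ℂ, f = c • (1 : V →ₗ[ℂ] V) := by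
  let F : V ⟶ V := ⟨InducedCategory.homMk (ModuleCat.ofHom f), fun g ↦ by
    ext1
    ext1
    exact LinearMap.congr_fun (hf g) _⟩
  obtain ⟨c, hc⟩ := endomorphism_simple_eq_smul_id ℂ F
  exact ⟨c, congrArg (fun t : V ⟶ V ↦ t.hom.hom.hom) hc.symm⟩

variable (V)

instance [Simple V] : Nontrivial V := by
  by_contra h
  have := not_nontrivial_iff_subsingleton.1 h
  refine id_nonzero V ?_
  ext v
  exact Subsingleton.elim _ _

theorem exists_centralCharacter [Simple V] :
    ∃ l : repCenter V →* ℂ, ∀ g : repCenter V, V.ρ g = l g • (1 : V →ₗ[ℂ] V) := by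
  choose l hl using fun g : repCenter V ↦ eq_smul_one_of_commute ((mem_repCenter V).1 g.2)
  have hinj : Function.Injective fun c : ℂ ↦ c • (1 : V →ₗ[ℂ] V) :=
    smul_left_injective ℂ one_ne_zero
  refine ⟨⟨⟨l, hinj ?_⟩, fun a b ↦ hinj ?_⟩, hl⟩
  · simp only [← hl, OneMemClass.coe_one, map_one, one_smul]
  · change l (a * b) • (1 : V →ₗ[ℂ] V) = (l a * l b) • (1 : V →ₗ[ℂ] V)
    rw [← hl, coe_mul, map_mul, hl a, hl b, smul_mul_smul_comm, one_mul]

variable {V}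

theorem isCyclic_center_of_repKer_eq_bot [Finite G] [Simple V] (h : repKer V = ⊥) :
    IsCyclic (center G) := by
  obtain ⟨l, hl⟩ := exists_centralCharacter V
  have hρ : Function.Injective (Representation.asGroupHom V.ρ) := (MonoidHom.ker_eq_bot_iff _).1 h
  refine isCyclic_of_injective_ringHom (l.comp (inclusion (center_le_repCenter V))) fun a b hab ↦ ?_
  refine Subtype.ext (hρ (Units.ext ?_))
  exact (hl _).trans ((congrArg (· • 1) hab).trans (hl _).symm)

theorem isCyclic_quotient_repKer [Finite G] [Simple V] (h : commutator G ≤ repKer V) :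
    IsCyclic (G ⧸ repKer V) := by
  obtain ⟨l, hl⟩ := exists_centralCharacter V
  have hmem (g : G) : g ∈ repCenter V := repCenter_eq_top_iff.2 h ▸ mem_top g
  let χ : G →* ℂˣ := (l.comp ((MonoidHom.id G).codRestrict _ hmem)).toHomUnits
  have hker : χ.ker = repKer V := by
    ext g
    rw [MonoidHom.mem_ker, mem_repKer, hl ⟨g, hmem g⟩, ← Units.val_inj,
      ← (smul_left_injective ℂ (one_ne_zero (α := V →ₗ[ℂ] V))).eq_iff]
    change l _ • (1 : V →ₗ[ℂ] V) = (1 : ℂ) • 1 ↔ _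
    rw [one_smul]
    rfl
  have : IsCyclic (G ⧸ χ.ker) := isCyclic_of_injective_ringHom
    ((Units.coeHom ℂ).comp (QuotientGroup.kerLift χ))
    (Units.val_injective.comp (QuotientGroup.kerLift_injective χ))
  exact isCyclic_of_surjective _ (QuotientGroup.quotientMulEquivOfEq hker).surjective

theorem character_eq_zero_of_notMem_repCenter [Simple V] (h : commutator G ≤ repCenter V) {g : G}
    (hg : g ∉ repCenter V) : V.character g = 0 := by
  obtain ⟨l, hl⟩ := exists_centralCharacter V
  simp only [mem_repCenter_iff_commutatorElement_mem, not_forall] at hg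
  obtain ⟨x, hx⟩ := hg
  have hmem : ⁅x, g⁆ ∈ repCenter V := h (commutator_mem_commutator (mem_top x) (mem_top g))
  have hne : l ⟨_, hmem⟩ ≠ 1 := by
    intro hone
    have h1 : ⁅x, g⁆ ∈ repKer V := (mem_repKer V).2 ((hl ⟨_, hmem⟩).trans (by rw [hone, one_smul]))
    exact hx (commutatorElement_inv x g ▸ inv_mem h1)
  -- `⁅x, g⁆ * g` is a conjugate of `g`, and `⁅x, g⁆` acts by a scalar different from `1`.
  have hchar : V.character g = l ⟨_, hmem⟩ * V.character g := calc
    V.character g = V.character (⁅x, g⁆ * g) := by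
      rw [commutatorElement_def, inv_mul_cancel_right, FDRep.char_conj]
    _ = l ⟨_, hmem⟩ * V.character g := by
      rw [FDRep.character, map_mul, hl ⟨_, hmem⟩, smul_one_mul, map_smul, smul_eq_mul]
      rfl
  by_contra hzero
  exact hne ((right_eq_mul₀ hzero).1 hchar)

theorem character_mul_character_inv_of_mem_repCenter [Simple V] {g : G} (hg : g ∈ repCenter V) :
    V.character g * V.character g⁻¹ = (repDegree V : ℂ) ^ 2 := by
  obtain ⟨l, hl⟩ := exists_centralCharacter V
  have hchar (z : repCenter V) : V.character z = l z * repDegree V := by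
    rw [FDRep.character, hl z, map_smul, LinearMap.trace_one, smul_eq_mul, repDegree]
  have hinv : l ⟨g, hg⟩ * l ⟨g, hg⟩⁻¹ = 1 := by rw [← map_mul, mul_inv_cancel, map_one]
  have hchar_inv : V.character g⁻¹ = l ⟨g, hg⟩⁻¹ * repDegree V := hchar ⟨g, hg⟩⁻¹
  linear_combination V.character g⁻¹ * hchar ⟨g, hg⟩ +
    l ⟨g, hg⟩ * repDegree V * hchar_inv + (repDegree V : ℂ) ^ 2 * hinv

variable (V)

theorem index_repCenter [Finite G] [Simple V] (h : commutator G ≤ repCenter V) :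
    (repCenter V).index = repDegree V ^ 2 := by
  classical
  have : Fintype G := Fintype.ofFinite G
  have hsum : (Nat.card G : ℂ) = Nat.card (repCenter V) * (repDegree V : ℂ) ^ 2 := calc
    (Nat.card G : ℂ) = ∑ g : G, V.character g * V.character g⁻¹ :=
      ((FDRep.simple_iff_char_is_norm_one V).1 inferInstance).symm
    _ = ∑ g : G, if g ∈ repCenter V then (repDegree V : ℂ) ^ 2 else 0 := by
      refine Finset.sum_congr rfl fun g _ ↦ ?_
      split_ifs with hg
      · exact character_mul_character_inv_of_mem_repCenter hg
      · rw [character_eq_zero_of_notMem_repCenter h hg, zero_mul]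
    _ = Nat.card (repCenter V) * (repDegree V : ℂ) ^ 2 := by
      rw [← Finset.sum_filter, Finset.sum_const, nsmul_eq_mul, ← Fintype.card_subtype,
        Nat.card_eq_fintype_card]
  rw [← (repCenter V).card_mul_index] at hsum
  exact Nat.eq_of_mul_eq_mul_left Nat.card_pos (mod_cast hsum)

theorem codegree_mul_repDegree_mul_card_repKer [Finite G] [Simple V]
    (h : commutator G ≤ repCenter V) :
    codegree V * repDegree V * Nat.card (repKer V) = Nat.card G := by
  have hdvd : repDegree V ∣ (repKer V).index :=
    (dvd_pow_self _ two_ne_zero).trans <|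
      index_repCenter V h ▸ index_dvd_of_le (repKer_le_repCenter V)
  rw [codegree, Nat.div_mul_cancel hdvd, index_mul_card]

theorem repDegree_mul_card_repKer [Finite G] [Simple V] (h : commutator G ≤ repCenter V) {m : ℕ}
    (hm : m * codegree V = Nat.card G) : repDegree V * Nat.card (repKer V) = m := by
  have hmul := codegree_mul_repDegree_mul_card_repKer V h
  have hpos : 0 < codegree V := Nat.pos_of_mul_pos_left (hm ▸ Nat.card_pos)
  rw [← hm, mul_comm m, mul_assoc] at hmul
  exact Nat.eq_of_mul_eq_mul_left hpos hmul

variable {V}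

theorem repDegree_ne_one_of_prime_card_repKer [Finite G] [Simple V]
    (hG : commutator G ≤ center G) (hne : center G ≠ ⊤) (hker : (Nat.card (repKer V)).Prime) :
    repDegree V ≠ 1 := by
  intro hdeg
  have hcyc : IsCyclic (G ⧸ repKer V) :=
    isCyclic_quotient_repKer (commutator_le_repKer_of_repDegree_eq_one hdeg)
  have : Fact (Nat.card (repKer V)).Prime := ⟨hker⟩
  have hbot : repKer V ≠ ⊥ := mt card_eq_one.2 hker.ne_one
  have hle : repKer V ≤ center G := by
    refine subgroupOf_eq_top.1 <| (eq_bot_or_eq_top_of_prime_card _).resolve_left fun h ↦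
      inf_center_ne_bot hG hbot ?_
    exact (subgroupOf_eq_bot.1 h).symm.eq_bot
  have hcomm : IsMulCommutative G :=
    MonoidHom.isMulCommutative_of_isCyclic_of_ker_le_center (QuotientGroup.mk' (repKer V))
      ((QuotientGroup.ker_mk' _).trans_le hle)
  exact hne (center_eq_top_iff.2 hcomm)

theorem repDegree_eq_and_repKer_eq_bot [Finite G] [Simple V] {p : ℕ} (hp : p.Prime)
    (hG : commutator G ≤ center G) (hne : center G ≠ ⊤) (hcod : p * codegree V = Nat.card G) :
    repDegree V = p ∧ repKer V = ⊥ := by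
  have hmul := repDegree_mul_card_repKer V (hG.trans (center_le_repCenter V)) hcod
  rcases (Nat.dvd_prime hp).1 (Dvd.intro _ hmul) with hdeg | hdeg
  · rw [hdeg, one_mul] at hmul
    exact absurd hdeg (repDegree_ne_one_of_prime_card_repKer hG hne (hmul ▸ hp))
  · refine ⟨hdeg, card_eq_one.1 (Nat.eq_of_mul_eq_mul_left hp.pos ?_)⟩
    rw [mul_one, ← hdeg, hmul, hdeg]

theorem isCyclic_center_and_index_center_eq_prime_sq [Finite G] [Simple V] {p : ℕ} (hp : p.Prime)
    (hG : commutator G ≤ center G) (hne : center G ≠ ⊤) (hcod : p * codegree V = Nat.card G) :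
    IsCyclic (center G) ∧ (center G).index = p ^ 2 := by
  obtain ⟨hdeg, hker⟩ := repDegree_eq_and_repKer_eq_bot hp hG hne hcod
  refine ⟨isCyclic_center_of_repKer_eq_bot hker, ?_⟩
  rw [← repCenter_eq_center hker, index_repCenter V (hG.trans (center_le_repCenter V)), hdeg]

theorem commutator_le_repKer_and_card_repKer_eq_prime_sq [Finite G] [Simple V] {p : ℕ}
    [hp : Fact p.Prime] (hG : IsPGroup p G) [IsCyclic (center G)] (hidx : (center G).index = p ^ 2)
    (hcod : p ^ 2 * codegree V = Nat.card G) :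
    commutator G ≤ repKer V ∧ Nat.card (repKer V) = p ^ 2 := by
  have hGZ : commutator G ≤ center G := commutator_le_center_of_index_eq_prime_sq hidx
  have hGV : commutator G ≤ repCenter V := hGZ.trans (center_le_repCenter V)
  have hmul := repDegree_mul_card_repKer V hGV hcod
  have hdeg : repDegree V ∣ p := by
    rw [← Nat.pow_dvd_pow_iff two_ne_zero, ← index_repCenter V hGV, ← hidx]
    exact index_dvd_of_le (center_le_repCenter V)
  have hbot : repKer V ≠ ⊥ := by
    intro h
    rw [h, card_bot, mul_one] at hmul
    have hle : p ^ 2 ≤ p ^ 1 := by simpa [hmul] using Nat.le_of_dvd hp.out.pos hdeg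
    exact absurd ((Nat.pow_le_pow_iff_right hp.out.one_lt).1 hle) (by decide)
  have hle : commutator G ≤ repKer V :=
    commutator_le_of_inf_center_ne_bot hG hidx (inf_center_ne_bot hGZ hbot)
  have hdeg_one : repDegree V = 1 := by
    have hsq := index_repCenter V hGV
    rw [repCenter_eq_top_iff.2 hle, index_top] at hsq
    exact (pow_eq_one_iff.1 hsq.symm).resolve_right two_ne_zero
  exact ⟨hle, by rwa [hdeg_one, one_mul] at hmul⟩

end Representation

theorem class_two_full_codegrees_general (p n : ℕ) (hp : p.Prime) (G : Type) [Group G]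
    (hcard : Nat.card G = p ^ n) (hn : 4 ≤ n) (hclass : nilClass G = 2)
    (hfaithful : p ^ (n - 1) ∈ codSet G) (hlinear : p ^ (n - 2) ∈ codSet G) :
    Nat.card (commutator G) = p ∧ IsCyclic (Subgroup.center G) ∧
      (Subgroup.center G).index = p ^ 2 ∧
      ∃ φ : Multiplicative (ZMod p) →* MulAut (Multiplicative (ZMod (p ^ (n - 1)))),
        Nonempty (G ≃* Multiplicative (ZMod (p ^ (n - 1))) ⋊[φ] Multiplicative (ZMod p)) := by
  have : Fact p.Prime := ⟨hp⟩
  have : Finite G := Nat.finite_of_card_ne_zero (hcard ▸ pow_ne_zero n hp.ne_zero)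
  obtain ⟨V, _, hV⟩ := hfaithful
  obtain ⟨W, _, hW⟩ := hlinear
  obtain ⟨_, hidx⟩ := isCyclic_center_and_index_center_eq_prime_sq hp
    (commutator_le_center_of_nilClass_eq_two hclass) (center_ne_top_of_nilClass_eq_two hclass)
    (V := V) (by rw [hV, hcard, mul_pow_sub_one (by omega)])
  obtain ⟨hGW, hker⟩ := commutator_le_repKer_and_card_repKer_eq_prime_sq
    (IsPGroup.of_card hcard) hidx (V := W)
    (by rw [hW, hcard, ← pow_add, Nat.add_sub_cancel' (by omega)])
  have : IsCyclic (G ⧸ repKer W) := isCyclic_quotient_repKer hGW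
  exact ⟨card_commutator_eq_prime hidx, inferInstance, hidx,
    exists_mulEquiv_semidirectProduct_of_isCyclic_quotient hcard hn hidx hGW hker⟩

/-- A `p`-group of order `p^n`, `n ≥ 4`, of nilpotence class exactly 2 with
`cod(G) = {p^i | 0 ≤ i ≤ n-1}` has `|G'| = p`, cyclic center of index `p^2`, and is
isomorphic to a semidirect product `ℤ_{p^{n-1}} ⋊ ℤ_p`. -/
theorem class_two_full_codegrees (p n : ℕ) (hp : p.Prime) (G : Type) [Group G] [Fintype G]
    (hcard : Fintype.card G = p ^ n) (hn : 4 ≤ n) (hclass : nilClass G = 2)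
    (hcod : codSet G = {m | ∃ i ≤ n - 1, m = p ^ i}) :
    Nat.card (commutator G) = p ∧ IsCyclic (Subgroup.center G) ∧
      (Subgroup.center G).index = p ^ 2 ∧
      ∃ φ : Multiplicative (ZMod p) →* MulAut (Multiplicative (ZMod (p ^ (n - 1)))),
        Nonempty (G ≃* Multiplicative (ZMod (p ^ (n - 1))) ⋊[φ] Multiplicative (ZMod p)) := by
  exact class_two_full_codegrees_general p n hp G (Nat.card_eq_fintype_card.trans hcard) hn hclass
    (hcod ▸ ⟨n - 1, le_rfl, rfl⟩) (hcod ▸ ⟨n - 2, by omega, rfl⟩)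
end
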